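/- arXiv:2310.10112 — 5 statements merged into one kernel-verified Lean document; each statement's English description precedes it below -/
import Mathlib

section
/- (a) There exists a rational number C with 2-adic valuation 0 (odd numerator and denominator) such that ε + 1 = C·√m·(ε − 1). (b) There exist a sign s₀ ∈ {1, −1} and a nonzero rational number r with 2-adic valuation 0 such that the principal fractional ideal of K generated by ε + s₀ equals r·𝔭·𝔩₂ (an equality of fractional ideals of ℤ[√m]). -/
open NumberField
open scoped nonZeroDivisors

lemma jac_prod {ι : Type*} (S : Finset ι) (f : ι → ℕ) (k : ℕ) :
    jacobiSym ((∏ j ∈ S, f j : ℕ) : ℤ) k = ∏ j ∈ S, jacobiSym (f j : ℤ) k := by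
  classical
  induction S using Finset.induction_on with
  | empty => simp
  | insert a s ha ih => rw [Finset.prod_insert ha, Finset.prod_insert ha, Nat.cast_mul, jacobiSym.mul_left, ih]

lemma key {n : ℕ} (hn : Even n) (l : Fin n → ℕ) (z o : Fin n) (hzo : z ≠ o)
    (hs : ∀ i j, i ≠ z → j ≠ z → i ≠ j → jacobiSym (l i : ℤ) (l j) = -1)
    (h12 : jacobiSym (l z : ℤ) (l o) = -1)
    (h1j : ∀ j, j ≠ z → j ≠ o → jacobiSym (l z : ℤ) (l j) = 1)
    (S : Finset (Fin n)) (hz : z ∉ S) (c : ℤ)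
    (h1 : ∀ i ∈ S, jacobiSym ((∏ j ∈ Sᶜ, l j : ℕ) : ℤ) (l i) = c)
    (h2 : ∀ i ∉ S, i ≠ z → jacobiSym ((∏ j ∈ S, l j : ℕ) : ℤ) (l i) = c) :
    (c = 1 → S = ∅) ∧ (c = -1 → S = {o}) := by
  have hcard : S.card + (Sᶜ.erase z).card + 1 = n := by
    have h := Finset.card_add_card_compl S
    rw [Finset.card_erase_of_mem (by simpa using hz)]
    have : 0 < Sᶜ.card := Finset.card_pos.2 ⟨z, by simpa using hz⟩
    rw [Fintype.card_fin] at h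
    omega
  have e2 : ∀ i ∉ S, i ≠ z → (-1 : ℤ) ^ S.card = c := by
    intro i hi hiz
    rw [← h2 i hi hiz, jac_prod, Finset.prod_congr rfl (g := fun _ => (-1 : ℤ)), Finset.prod_const]
    intro j hj
    exact hs j i (fun h => hz (h ▸ hj)) hiz (fun h => hi (h ▸ hj))
  have e1 : ∀ i ∈ S, jacobiSym (l z : ℤ) (l i) * (-1 : ℤ) ^ (Sᶜ.erase z).card = c := by
    intro i hi
    rw [← h1 i hi, jac_prod, ← Finset.mul_prod_erase Sᶜ _ (a := z) (by simpa using hz)]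
    congr 1
    rw [Finset.prod_congr rfl (g := fun _ => (-1 : ℤ)), Finset.prod_const]
    intro j hj
    simp at hj
    exact hs j i hj.1 (fun h => hz (h ▸ hi)) (fun h => hj.2 (h ▸ hi))
  have hpar : (-1 : ℤ) ^ (Sᶜ.erase z).card = - (-1 : ℤ) ^ S.card := by
    rcases Nat.even_or_odd S.card with h | h
    · have : Odd (Sᶜ.erase z).card := by grind
      rw [this.neg_one_pow, h.neg_one_pow]
    · have : Even (Sᶜ.erase z).card := by grind
      rw [this.neg_one_pow, h.neg_one_pow]; rfl
  rw [hpar] at e1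
  have hpm := neg_one_pow_eq_or ℤ S.card
  by_cases ho : o ∈ S
  · have ho1 := e1 o ho
    rw [h12] at ho1
    have hS : S = {o} := by
      refine Finset.eq_singleton_iff_unique_mem.2 ⟨ho, fun i hi => ?_⟩
      by_contra hio
      have := e1 i hi
      rw [h1j i (fun h => hz (h ▸ hi)) hio] at this
      rcases hpm with h | h <;> rw [h] at this ho1 <;> omega
    refine ⟨fun hc => ?_, fun _ => hS⟩
    rw [hS] at ho1
    simp at ho1
    omega
  · have ho2 := e2 o ho hzo.symm
    have hS : S = ∅ := by
      refine Finset.eq_empty_of_forall_notMem (fun i hi => ?_)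
      have := e1 i hi
      rw [h1j i (fun h => hz (h ▸ hi)) (fun h => ho (h ▸ hi))] at this
      rcases hpm with h | h <;> rw [h] at this ho2 <;> omega
    refine ⟨fun _ => hS, fun hc => ?_⟩
    rw [hS] at ho2
    simp at ho2
    omega

lemma split {n : ℕ} (l : Fin n → ℕ) (hlp : ∀ i, (l i).Prime) (hlinj : Function.Injective l)
    (A B b : ℕ) (hc : Nat.Coprime A B) (h : A * B = (∏ i, l i) * b ^ 2) :
    ∃ (S : Finset (Fin n)) (u v : ℕ), A = (∏ i ∈ S, l i) * u ^ 2 ∧ B = (∏ i ∈ Sᶜ, l i) * v ^ 2 := by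
  classical
  let S : Finset (Fin n) := Finset.univ.filter (fun i => l i ∣ A)
  have hco : ∀ i j, i ≠ j → Nat.Coprime (l i) (l j) := fun i j hij =>
    (Nat.coprime_primes (hlp i) (hlp j)).2 (fun h => hij (hlinj h))
  have hd : ∀ i, l i ∣ A * B := fun i => by
    rw [h]; exact Dvd.dvd.mul_right (Finset.dvd_prod_of_mem l (Finset.mem_univ i)) _
  have hDA : (∏ i ∈ S, l i) ∣ A := by
    refine Finset.prod_dvd_of_isRelPrime ?_ ?_
    · intro i _ j _ hij
      exact Nat.coprime_iff_isRelPrime.1 (hco i j hij)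
    · intro i hi; exact (Finset.mem_filter.1 hi).2
  have hEB : (∏ i ∈ Sᶜ, l i) ∣ B := by
    refine Finset.prod_dvd_of_isRelPrime ?_ ?_
    · intro i _ j _ hij
      exact Nat.coprime_iff_isRelPrime.1 (hco i j hij)
    · intro i hi
      have : ¬ l i ∣ A := by simpa [S] using hi
      exact ((hlp i).dvd_mul.1 (hd i)).resolve_left this
  obtain ⟨X, hX⟩ := hDA
  obtain ⟨Y, hY⟩ := hEB
  have hprod : (∏ i ∈ S, l i) * (∏ i ∈ Sᶜ, l i) = ∏ i, l i := Finset.prod_mul_prod_compl S l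
  have hXY : X * Y = b ^ 2 := by
    have hpos : 0 < ∏ i, l i := Finset.prod_pos (fun i _ => (hlp i).pos)
    apply Nat.eq_of_mul_eq_mul_left hpos
    rw [← h, ← hprod, hX, hY, ← hX, ← hY]
    conv_rhs => rw [hX, hY]
    ring
  have hcXY : IsCoprime (X : ℤ) (Y : ℤ) := by
    rw [Nat.isCoprime_iff_coprime]
    exact Nat.Coprime.coprime_dvd_left (Dvd.intro_left _ hX.symm)
      (Nat.Coprime.coprime_dvd_right (Dvd.intro_left _ hY.symm) hc)
  have sq : ∀ X Y : ℕ, IsCoprime (X : ℤ) (Y : ℤ) → X * Y = b ^ 2 → ∃ u : ℕ, X = u ^ 2 := by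
    intro X Y hc h
    obtain ⟨u, hu⟩ := Int.sq_of_gcd_eq_one (Int.isCoprime_iff_gcd_eq_one.1 hc) (by exact_mod_cast h : (X : ℤ) * Y = (b : ℤ) ^ 2)
    refine ⟨u.natAbs, ?_⟩
    zify
    rw [sq_abs]
    rcases hu with h | h
    · exact h
    · nlinarith [sq_nonneg u]
  obtain ⟨u, hu⟩ := sq X Y hcXY hXY
  obtain ⟨v, hv⟩ := sq Y X hcXY.symm (by rw [mul_comm]; exact hXY)
  exact ⟨S, u, v, by rw [hX, hu], by rw [hY, hv]⟩

/-- residue symbol from `D u² - E v² = ± t` -/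
lemma jac_of_eq (p D E u v : ℕ) (s t : ℤ) (hp : p.Prime) (h4 : p % 4 = 1) (hs : s = 1 ∨ s = -1)
    (hD : p ∣ D) (hv : ¬ p ∣ v) (h : (D : ℤ) * u ^ 2 - E * v ^ 2 = s * t) :
    jacobiSym (E : ℤ) p = jacobiSym t p := by
  have hm1 : jacobiSym (-1) p = 1 := by
    rw [jacobiSym.at_neg_one (by rw [Nat.odd_iff]; omega), ZMod.χ₄_nat_one_mod_four h4]
  have h1 : jacobiSym ((E : ℤ) * v ^ 2) p = jacobiSym ((-1) * (s * t)) p := by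
    apply jacobiSym.mod_left'
    apply Int.ModEq.symm
    rw [Int.modEq_iff_dvd]
    have : (E : ℤ) * v ^ 2 - -1 * (s * t) = D * u ^ 2 := by rw [← h]; ring
    rw [this]
    exact Dvd.dvd.mul_right (by exact_mod_cast hD) _
  have hvg : (v : ℤ).gcd p = 1 := by
    rw [Int.gcd_natCast_natCast]
    exact ((Nat.Prime.coprime_iff_not_dvd hp).2 hv).symm
  rw [jacobiSym.mul_left, jacobiSym.pow_left, jacobiSym.sq_one hvg, jacobiSym.mul_left, jacobiSym.mul_left, hm1] at h1
  rcases hs with rfl | rfl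
  · simpa using h1
  · rw [hm1] at h1; simpa using h1


lemma ideal_sq_inj {R : Type*} [CommRing R] [IsDedekindDomain R] {I J : Ideal R}
    (h : I ^ 2 = J ^ 2) : I = J :=
  dvd_antisymm ((UniqueFactorizationMonoid.pow_dvd_pow_iff_dvd two_ne_zero).1 (dvd_of_eq h))
    ((UniqueFactorizationMonoid.pow_dvd_pow_iff_dvd two_ne_zero).1 (dvd_of_eq h.symm))

lemma prod_mod {ι : Type*} (S : Finset ι) (l : ι → ℕ) (k r : ℕ) (h : ∀ i ∈ S, l i ≡ r [MOD k]) :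
    ∏ i ∈ S, l i ≡ r ^ S.card [MOD k] := by
  classical
  induction S using Finset.induction_on with
  | empty => simp; rfl
  | insert a s ha ih =>
    rw [Finset.prod_insert ha, Finset.card_insert_of_notMem ha, pow_succ, mul_comm]
    exact (ih (fun i hi => h i (Finset.mem_insert_of_mem hi))).mul (h a (Finset.mem_insert_self a s))

lemma core {n : ℕ} (hn : Even n) (l : Fin n → ℕ) (hlp : ∀ i, (l i).Prime)
    (hlinj : Function.Injective l) (z o : Fin n) (hzo : z ≠ o)
    (hl1 : l z % 8 = 3) (hli : ∀ i, i ≠ z → l i % 8 = 5)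
    (hs : ∀ i j, i ≠ z → j ≠ z → i ≠ j → jacobiSym (l i : ℤ) (l j) = -1)
    (h12 : jacobiSym (l z : ℤ) (l o) = -1)
    (h1j : ∀ j, j ≠ z → j ≠ o → jacobiSym (l z : ℤ) (l j) = 1)
    (m : ℕ) (hm : m = ∏ i, l i)
    (a b : ℕ) (hb : 0 < b) (hpell : a ^ 2 = m * b ^ 2 + 1)
    (hmin : ∀ a' b' : ℕ, 0 < a' → 0 < b' → a' ^ 2 = m * b' ^ 2 + 1 → a ≤ a') :
    Odd b ∧ Even a ∧ 1 < a ∧ ∃ u : ℕ, a + 1 = l o * u ^ 2 := by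
  have hmpos : 0 < m := by rw [hm]; exact Finset.prod_pos (fun i _ => (hlp i).pos)
  have ha1 : 1 < a := by
    have : 0 < m * b ^ 2 := by positivity
    nlinarith
  -- general analysis
  have gen : ∀ (S : Finset (Fin n)) (u v : ℕ) (s t c : ℤ), z ∉ S → (s = 1 ∨ s = -1) →
      (∀ i, i ≠ z → jacobiSym t (l i) = c) →
      Nat.Coprime ((∏ i ∈ S, l i) * u ^ 2) ((∏ i ∈ Sᶜ, l i) * v ^ 2) →
      (((∏ i ∈ S, l i : ℕ) : ℤ) * u ^ 2 - ((∏ i ∈ Sᶜ, l i : ℕ) : ℤ) * v ^ 2 = s * t) →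
      (c = 1 → S = ∅) ∧ (c = -1 → S = {o}) := by
    intro S u v s t c hz hsg ht hcop heq
    have h4 : ∀ i, i ≠ z → l i % 4 = 1 := fun i hi => by have := hli i hi; omega
    refine key hn l z o hzo hs h12 h1j S hz c ?_ ?_
    · intro i hi
      have hiz : i ≠ z := fun h => hz (h ▸ hi)
      rw [← ht i hiz]
      have hd : l i ∣ ∏ i ∈ S, l i := Finset.dvd_prod_of_mem l hi
      refine jac_of_eq (l i) _ _ u v s t (hlp i) (h4 i hiz) hsg hd ?_ heq
      intro hv
      exact Nat.not_coprime_of_dvd_of_dvd (hlp i).one_lt (hd.mul_right _)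
        ((hv.trans (dvd_pow_self v two_ne_zero)).mul_left _) hcop
    · intro i hi hiz
      rw [← ht i hiz]
      have hd : l i ∣ ∏ i ∈ Sᶜ, l i := Finset.dvd_prod_of_mem l (by simpa using hi)
      refine jac_of_eq (l i) _ _ v u (-s) t (hlp i) (h4 i hiz) (by omega) hd ?_ (by linarith)
      intro hv
      exact Nat.not_coprime_of_dvd_of_dvd (hlp i).one_lt
        ((hv.trans (dvd_pow_self u two_ne_zero)).mul_left _) (hd.mul_right _) hcop
  rcases Nat.even_or_odd b with hbe | hbo
  · exfalso
    obtain ⟨b', rfl⟩ := hbe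
    have hao : Odd a := by
      have : Odd (a ^ 2) := ⟨m * 2 * b' ^ 2, by rw [hpell]; ring⟩
      exact Nat.Odd.of_mul_left (by rwa [pow_two] at this)
    obtain ⟨B, rfl⟩ := hao
    have hB : (B + 1) * B = (∏ i, l i) * b' ^ 2 := by rw [← hm]; nlinarith
    obtain ⟨S, u, v, hu, hv⟩ := split l hlp hlinj (B + 1) B b' (by simp) hB
    have hcop : Nat.Coprime (B + 1) B := by simp
    have heq : ((∏ i ∈ S, l i : ℕ) : ℤ) * u ^ 2 - ((∏ i ∈ Sᶜ, l i : ℕ) : ℤ) * v ^ 2 = 1 := by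
      have h1 : ((B + 1 : ℕ) : ℤ) = ((∏ i ∈ S, l i : ℕ) : ℤ) * u ^ 2 := by rw [hu]; push_cast; ring
      have h2 : ((B : ℕ) : ℤ) = ((∏ i ∈ Sᶜ, l i : ℕ) : ℤ) * v ^ 2 := by rw [hv]; push_cast; ring
      rw [← h1, ← h2]; push_cast; ring
    by_cases hz : z ∈ S
    · have hS : Sᶜ = ∅ := by
        refine (gen Sᶜ v u (-1) 1 1 (by simpa using hz) (by simp) (by simp) ?_ ?_).1 rfl
        · rw [compl_compl, ← hu, ← hv]; exact hcop.symm
        · rw [compl_compl]; linarith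
      rw [hS] at heq
      have hd : l z ∣ ∏ i ∈ S, l i := Finset.dvd_prod_of_mem l hz
      haveI : Fact (l z).Prime := ⟨hlp z⟩
      have h0 : ((∏ i ∈ S, l i : ℕ) : ZMod (l z)) = 0 := (ZMod.natCast_eq_zero_iff _ _).2 hd
      have h1 : (v : ZMod (l z)) ^ 2 = -1 := by
        have := congrArg (Int.cast : ℤ → ZMod (l z)) heq
        rw [Int.cast_sub, Int.cast_mul, Int.cast_natCast, h0] at this
        simp at this
        rw [← this]; simp
      exact ZMod.mod_four_ne_three_of_sq_eq_neg_one h1 (by omega)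
    · have hS : S = ∅ := by
        refine (gen S u v 1 1 1 hz (by simp) (by simp) ?_ ?_).1 rfl
        · rw [← hu, ← hv]; exact hcop
        · linarith
      subst hS
      simp only [Finset.prod_empty, Finset.compl_empty, one_mul, ← hm] at hu hv
      have hu0 : 0 < u := by
        rcases Nat.eq_zero_or_pos u with h | h
        · simp [h] at hu
        · exact h
      have hv0 : 0 < v := by
        rcases Nat.eq_zero_or_pos v with h | h
        · simp [h] at hv; omega
        · exact h
      have := hmin u v hu0 hv0 (by rw [← hu, ← hv])
      nlinarith
  · have hm8 : m ≡ 7 [MOD 8] := by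
      rw [hm, ← Finset.mul_prod_erase Finset.univ l (Finset.mem_univ z)]
      have h1 := prod_mod (Finset.univ.erase z) l 8 5 (fun i hi => hli i (Finset.ne_of_mem_erase hi))
      rw [Finset.card_erase_of_mem (Finset.mem_univ z), Finset.card_univ, Fintype.card_fin] at h1
      have hlt : 0 < n := z.pos
      obtain ⟨k, hk⟩ : ∃ k, n - 1 = 2 * k + 1 := by
        obtain ⟨k, hk⟩ := hn
        exact ⟨k - 1, by omega⟩
      have h2 : 5 ^ (n - 1) ≡ 5 [MOD 8] := by
        rw [hk, pow_succ, pow_mul]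
        have : (5 ^ 2) ^ k ≡ 1 ^ k [MOD 8] := Nat.ModEq.pow k (by decide)
        rw [one_pow] at this
        exact this.mul_right 5
      exact (Nat.ModEq.mul (show l z ≡ 3 [MOD 8] from hl1) (h1.trans h2)).trans (by decide)
    have hb8 : b ^ 2 ≡ 1 [MOD 8] := by
      have : b % 8 = 1 ∨ b % 8 = 3 ∨ b % 8 = 5 ∨ b % 8 = 7 := by
        rw [Nat.odd_iff] at hbo; omega
      rcases this with h | h | h | h <;>
        simp [Nat.ModEq, Nat.pow_mod, h]
    have ha8 : a ^ 2 % 8 = 0 := by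
      rw [hpell]
      exact ((hm8.mul hb8).add_right 1).trans (show 7 * 1 + 1 ≡ 0 [MOD 8] by decide)
    have ha4 : a % 4 = 0 := by
      rw [Nat.pow_mod] at ha8
      have h7 : a % 8 = 0 ∨ a % 8 = 1 ∨ a % 8 = 2 ∨ a % 8 = 3 ∨ a % 8 = 4 ∨ a % 8 = 5
        ∨ a % 8 = 6 ∨ a % 8 = 7 := by omega
      rcases h7 with h | h | h | h | h | h | h | h <;> rw [h] at ha8 <;> omega
    have hae : Even a := by rw [Nat.even_iff]; omega
    refine ⟨hbo, hae, ha1, ?_⟩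
    obtain ⟨B, rfl⟩ : ∃ B, a = B + 1 := ⟨a - 1, by omega⟩
    have hcop : Nat.Coprime (B + 1 + 1) B := by
      have hBo : Odd B := by rw [Nat.odd_iff]; omega
      have : Nat.Coprime 2 B := (Nat.coprime_two_left).2 hBo
      show Nat.Coprime (B + 2) B
      simpa using this
    obtain ⟨S, u, v, hu, hv⟩ := split l hlp hlinj (B + 1 + 1) B b hcop (by rw [← hm]; nlinarith)
    have heq : ((∏ i ∈ S, l i : ℕ) : ℤ) * u ^ 2 - ((∏ i ∈ Sᶜ, l i : ℕ) : ℤ) * v ^ 2 = 2 := by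
      have h1 : ((B + 1 + 1 : ℕ) : ℤ) = ((∏ i ∈ S, l i : ℕ) : ℤ) * u ^ 2 := by rw [hu]; push_cast; ring
      have h2 : ((B : ℕ) : ℤ) = ((∏ i ∈ Sᶜ, l i : ℕ) : ℤ) * v ^ 2 := by rw [hv]; push_cast; ring
      rw [← h1, ← h2]; push_cast; ring
    have hz : z ∉ S := by
      intro hz
      have hD : ∏ i ∈ S, l i ≡ 3 [MOD 4] := by
        rw [← Finset.mul_prod_erase S l hz]
        have h1 := prod_mod (S.erase z) l 4 1 (fun i hi => by
          have := hli i (Finset.ne_of_mem_erase hi)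
          show l i % 4 = 1 % 4
          omega)
        rw [one_pow] at h1
        exact (Nat.ModEq.mul (show l z ≡ 3 [MOD 4] by show l z % 4 = 3 % 4; omega) h1)
      have hu4 : u ^ 2 % 4 = 0 ∨ u ^ 2 % 4 = 1 := by
        rcases Nat.even_or_odd' u with ⟨k, rfl | rfl⟩
        · left; ring_nf; omega
        · right; ring_nf; omega
      have h3 : (B + 1 + 1) % 4 = (3 * (u ^ 2 % 4)) % 4 := by
        rw [hu, Nat.mul_mod, show (∏ i ∈ S, l i) % 4 = 3 from hD]
        
      rcases hu4 with h | h <;> rw [h] at h3 <;> omega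
    have hS : S = {o} := by
      refine (gen S u v 1 2 (-1) hz (by simp) ?_ ?_ ?_).2 rfl
      · intro i hi
        have h5 := hli i hi
        rw [jacobiSym.at_two (by rw [Nat.odd_iff]; omega), ZMod.χ₈_nat_eq_if_mod_eight]
        simp [h5]; omega
      · rw [← hu, ← hv]; exact hcop
      · linarith
    subst hS
    exact ⟨u, by simpa using hu⟩

/-- **Deng–Li family: the ideals `(ε ± 1)`.** With `ε = a + b√m` the fundamental unit:
(a) there is a 2-adic unit rational `C` with `ε + 1 = C·√m·(ε − 1)`; (b) for some sign
`s₀` and a 2-adic unit rational `r`, the principal fractional ideal `(ε + s₀)` equals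
`r·𝔭·𝔩₂`. -/
theorem dengLi_unit_ideals
    (n : ℕ) (hn : 2 ≤ n) (hneven : Even n)
    (l : Fin n → ℕ) (hlp : ∀ i, (l i).Prime) (hlinj : Function.Injective l)
    (hl1 : l ⟨0, by omega⟩ % 8 = 3)
    (hli : ∀ i : Fin n, i ≠ ⟨0, by omega⟩ → l i % 8 = 5)
    (hleg12 : jacobiSym (l ⟨0, by omega⟩ : ℤ) (l ⟨1, by omega⟩) = -1)
    (hleg1j : ∀ j : Fin n, 2 ≤ (j : ℕ) → jacobiSym (l ⟨0, by omega⟩ : ℤ) (l j) = 1)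
    (hlegij : ∀ i j : Fin n, 1 ≤ (i : ℕ) → i < j → jacobiSym (l i : ℤ) (l j) = -1)
    (m : ℕ) (hm : m = ∏ i, l i)
    (K : Type) [Field K] [NumberField K] (hdeg : Module.finrank ℚ K = 2)
    (α : 𝓞 K) (hα : α ^ 2 = (m : 𝓞 K)) (hgen : Algebra.adjoin ℤ {α} = ⊤)
    (P : Ideal (𝓞 K)) (hP : P.IsPrime) (hP2 : P ^ 2 = Ideal.span {(2 : 𝓞 K)})
    (L : Fin n → Ideal (𝓞 K)) (hL : ∀ i, (L i).IsPrime)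
    (hL2 : ∀ i, (L i) ^ 2 = Ideal.span {((l i : ℕ) : 𝓞 K)})
    (a b : ℕ) (ha : 0 < a) (hb : 0 < b) (hpell : a ^ 2 = m * b ^ 2 + 1)
    (hmin : ∀ a' b' : ℕ, 0 < a' → 0 < b' → a' ^ 2 = m * b' ^ 2 + 1 → a ≤ a') :
    (∃ C : ℚ, C ≠ 0 ∧ padicValRat 2 C = 0 ∧
      ((a : K) + (b : K) * algebraMap (𝓞 K) K α) + 1
        = (C : K) * algebraMap (𝓞 K) K α
            * (((a : K) + (b : K) * algebraMap (𝓞 K) K α) - 1)) ∧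
    (∃ s₀ : ℤ, (s₀ = 1 ∨ s₀ = -1) ∧ ∃ r : ℚ, r ≠ 0 ∧ padicValRat 2 r = 0 ∧
      FractionalIdeal.spanSingleton (𝓞 K)⁰
          (((a : K) + (b : K) * algebraMap (𝓞 K) K α) + (s₀ : K))
        = FractionalIdeal.spanSingleton (𝓞 K)⁰ (r : K)
            * (P : FractionalIdeal (𝓞 K)⁰ K)
            * (L ⟨1, by omega⟩ : FractionalIdeal (𝓞 K)⁰ K)) := by
  have hz1 : (⟨0, by omega⟩ : Fin n) ≠ ⟨1, by omega⟩ := by simp [Fin.ext_iff]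
  have hs : ∀ i j : Fin n, i ≠ ⟨0, by omega⟩ → j ≠ ⟨0, by omega⟩ → i ≠ j →
      jacobiSym (l i : ℤ) (l j) = -1 := by
    intro i j hi hj hij
    have hi5 := hli i hi
    have hj5 := hli j hj
    have hi1 : 1 ≤ (i : ℕ) := by
      have : (i : ℕ) ≠ 0 := fun h => hi (Fin.ext h)
      omega
    have hj1 : 1 ≤ (j : ℕ) := by
      have : (j : ℕ) ≠ 0 := fun h => hj (Fin.ext h)
      omega
    rcases lt_or_gt_of_ne hij with h | h
    · exact hlegij i j hi1 h
    · rw [jacobiSym.quadratic_reciprocity_one_mod_four (by omega) (by rw [Nat.odd_iff]; omega)]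
      exact hlegij j i hj1 h
  obtain ⟨hbo, hae, ha1, u, hu⟩ := core hneven l hlp hlinj ⟨0, by omega⟩ ⟨1, by omega⟩ hz1 hl1 hli hs
    hleg12 (fun j hj0 hj1 => hleg1j j (by
      have h0 : (j : ℕ) ≠ 0 := fun h => hj0 (Fin.ext h)
      have h1 : (j : ℕ) ≠ 1 := fun h => hj1 (Fin.ext h)
      omega)) m hm a b hb hpell hmin
  have hα' : (algebraMap (𝓞 K) K α) ^ 2 = (m : K) := by
    rw [← map_pow, hα, map_natCast]
  have val : ∀ k : ℕ, Odd k → padicValRat 2 (k : ℚ) = 0 := by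
    intro k hk
    rw [padicValRat.of_nat, padicValNat.eq_zero_of_not_dvd]
    · rfl
    · intro h
      exact (Nat.not_even_iff_odd.2 hk) (even_iff_two_dvd.2 h)
  have hpK : (a : K) ^ 2 = m * (b : K) ^ 2 + 1 := by exact_mod_cast congrArg (Nat.cast : ℕ → K) hpell
  constructor
  · obtain ⟨d, rfl⟩ : ∃ d, a = d + 1 := ⟨a - 1, by omega⟩
    have hdo : Odd d := by rw [Nat.even_add_one, Nat.not_even_iff_odd] at hae; exact hae
    have hd0 : d ≠ 0 := by omega
    have hdQ : (d : ℚ) ≠ 0 := by exact_mod_cast hd0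
    have hbQ : (b : ℚ) ≠ 0 := by exact_mod_cast hb.ne'
    have hdK : (d : K) ≠ 0 := by exact_mod_cast hd0
    refine ⟨(b : ℚ) / d, div_ne_zero hbQ hdQ, ?_, ?_⟩
    · rw [padicValRat.div hbQ hdQ, val b hbo, val d hdo]; rfl
    · push_cast at hpK ⊢
      field_simp
      linear_combination hpK - (b : K) ^ 2 * hα'
  · have huo : Odd u := by
      by_contra h
      rw [Nat.not_odd_iff_even] at h
      have h1 : Even (a + 1) := by
        rw [hu]; exact (h.pow_of_ne_zero two_ne_zero).mul_left _
      rw [Nat.even_add_one] at h1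
      exact h1 hae
    have hu0 : u ≠ 0 := by rintro rfl; simp at huo
    refine ⟨1, Or.inl rfl, (u : ℚ), by exact_mod_cast hu0, val u huo, ?_⟩
    have hpO : (a : 𝓞 K) ^ 2 = m * (b : 𝓞 K) ^ 2 + 1 := by
      exact_mod_cast congrArg (Nat.cast : ℕ → 𝓞 K) hpell
    have huO : (a : 𝓞 K) + 1 = (l ⟨1, by omega⟩ : 𝓞 K) * (u : 𝓞 K) ^ 2 := by
      exact_mod_cast congrArg (Nat.cast : ℕ → 𝓞 K) hu
    have hunit : IsUnit ((a : 𝓞 K) + b * α) := by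
      refine IsUnit.of_mul_eq_one ((a : 𝓞 K) - b * α) ?_
      linear_combination hpO - (b : 𝓞 K) ^ 2 * hα
    have hI : Ideal.span {(a : 𝓞 K) + b * α + 1}
        = Ideal.span {(u : 𝓞 K)} * P * L ⟨1, by omega⟩ := by
      apply ideal_sq_inj
      rw [mul_pow, mul_pow, hP2, hL2, Ideal.span_singleton_pow, Ideal.span_singleton_pow,
        Ideal.span_singleton_mul_span_singleton, Ideal.span_singleton_mul_span_singleton]
      have : ((a : 𝓞 K) + b * α + 1) ^ 2
          = ((u : 𝓞 K) ^ 2 * 2 * (l ⟨1, by omega⟩ : 𝓞 K)) * ((a : 𝓞 K) + b * α) := by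
        linear_combination (2 * ((a : 𝓞 K) + b * α)) * huO + (b : 𝓞 K) ^ 2 * hα - hpO
      rw [this]
      exact Ideal.span_singleton_mul_right_unit hunit _
    have hF := congrArg (fun I : Ideal (𝓞 K) => (I : FractionalIdeal (𝓞 K)⁰ K)) hI
    simp only [FractionalIdeal.coeIdeal_mul, FractionalIdeal.coeIdeal_span_singleton] at hF
    simpa using hF
end

section
/- The integer a satisfies a ≡ 4 (mod 8); that is, in the writing ε = a + b√m of the fundamental unit one has a = 4a′ with a′ odd. -/
open Finset in
lemma dl_decomp {n : ℕ} (l : Fin n → ℕ) (hlp : ∀ i, (l i).Prime)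
    (hlinj : Function.Injective l) (u v w : ℕ) (huv : Nat.Coprime u v)
    (h : u * v = (∏ i, l i) * w ^ 2) :
    ∃ (S : Finset (Fin n)) (x y : ℕ), u = (∏ i ∈ S, l i) * x ^ 2 ∧
      v = (∏ i ∈ Sᶜ, l i) * y ^ 2 ∧ x * y = w := by
  classical
  set S : Finset (Fin n) := univ.filter (fun i => l i ∣ u) with hS
  have hdvd : ∀ (T : Finset (Fin n)) (N : ℕ), (∀ i ∈ T, l i ∣ N) → (∏ i ∈ T, l i) ∣ N := by
    intro T N hT
    have h1 : ∏ p ∈ T.image l, p = ∏ i ∈ T, l i := prod_image (fun a _ b _ hab => hlinj hab)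
    rw [← h1]
    apply Finset.prod_primes_dvd
    · intro p hp
      obtain ⟨i, _, rfl⟩ := mem_image.1 hp
      exact (hlp i).prime
    · intro p hp
      obtain ⟨i, hi, rfl⟩ := mem_image.1 hp
      exact hT i hi
  have h1 : (∏ i ∈ S, l i) ∣ u := by
    apply hdvd
    intro i hi
    simpa [hS] using hi
  have h2 : (∏ i ∈ Sᶜ, l i) ∣ v := by
    apply hdvd
    intro i hi
    have hi' : ¬ l i ∣ u := by simpa [hS] using hi
    have : l i ∣ u * v := by
      rw [h]; exact Dvd.dvd.mul_right (dvd_prod_of_mem l (mem_univ i)) _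
    exact ((hlp i).dvd_mul.1 this).resolve_left hi'
  obtain ⟨u', hu'⟩ := h1
  obtain ⟨v', hv'⟩ := h2
  have hprod : (∏ i ∈ S, l i) * (∏ i ∈ Sᶜ, l i) = ∏ i, l i := prod_mul_prod_compl S l
  have hpos : 0 < ∏ i, l i := prod_pos (fun i _ => (hlp i).pos)
  have hw : u' * v' = w ^ 2 := by
    apply Nat.eq_of_mul_eq_mul_left hpos
    rw [← h, ← hprod, hu', hv']; ring
  have hc : Nat.Coprime u' v' :=
    Nat.Coprime.coprime_dvd_left ⟨_, by rw [hu', mul_comm]⟩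
      (Nat.Coprime.coprime_dvd_right ⟨_, by rw [hv', mul_comm]⟩ huv)
  obtain ⟨x, hx⟩ := exists_eq_pow_of_mul_eq_pow (Nat.isUnit_iff.2 hc) hw
  obtain ⟨y, hy⟩ := exists_eq_pow_of_mul_eq_pow (Nat.isUnit_iff.2 hc.symm)
    (by rw [mul_comm]; exact hw : v' * u' = w ^ 2)
  refine ⟨S, x, y, by rw [hu', hx], by rw [hv', hy], ?_⟩
  have : (x * y) ^ 2 = w ^ 2 := by rw [← hw, hx, hy]; ring
  exact Nat.pow_left_injective (n := 2) (by norm_num) this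

lemma dl_jac_sq (q : ℕ) (A B : ℤ) (h : (q : ℤ) ∣ A - B ^ 2) : jacobiSym A q ≠ -1 := by
  have h1 : jacobiSym A q = jacobiSym (B ^ 2) q :=
    jacobiSym.mod_left' (Int.emod_eq_emod_iff_emod_sub_eq_zero.2 (Int.emod_eq_zero_of_dvd h))
  rw [h1, jacobiSym.pow_left]
  nlinarith [sq_nonneg (jacobiSym B q)]

lemma dl_jac_two (q : ℕ) (h : q % 8 = 3 ∨ q % 8 = 5) : jacobiSym 2 q = -1 := by
  rw [jacobiSym.at_two (Nat.odd_iff.2 (by omega)), ZMod.χ₈_nat_eq_if_mod_eight]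
  rcases h with h | h <;> simp [h] <;> omega

lemma dl_jac_neg_one (q : ℕ) (h : q % 8 = 5) : jacobiSym (-1) q = 1 := by
  rw [jacobiSym.at_neg_one (Nat.odd_iff.2 (by omega)), ZMod.χ₄_nat_one_mod_four (by omega)]

lemma dl_jac_prod {ι : Type*} (l : ι → ℕ) (T : Finset ι) (q : ℕ) :
    jacobiSym ((∏ i ∈ T, l i : ℕ) : ℤ) q = ∏ i ∈ T, jacobiSym (l i : ℤ) q := by
  classical
  induction T using Finset.induction_on with
  | empty => simp
  | insert a s ha ih =>
    rw [Finset.prod_insert ha, Finset.prod_insert ha, Nat.cast_mul, jacobiSym.mul_left, ih]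

lemma dl_mod8 {ι : Type*} (l : ι → ℕ) (T : Finset ι) (h : ∀ i ∈ T, l i % 8 = 5) :
    (∏ i ∈ T, l i) % 8 = if Even T.card then 1 else 5 := by
  classical
  induction T using Finset.induction_on with
  | empty => simp
  | insert a s ha ih =>
    have h1 := ih (fun i hi => h i (Finset.mem_insert_of_mem hi))
    have h2 := h a (Finset.mem_insert_self _ _)
    rw [Finset.prod_insert ha, Finset.card_insert_of_notMem ha, Nat.mul_mod, h1, h2]
    by_cases hs : Even s.card <;> simp [hs, Nat.even_add_one]

open Finset in
lemma dl_core {n : ℕ} (hneven : Even n) (l : Fin n → ℕ) (z o : Fin n) (hoz : o ≠ z)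
    (hl1 : l z % 8 = 3) (hli : ∀ i, i ≠ z → l i % 8 = 5)
    (hzo : jacobiSym (l z : ℤ) (l o) = -1) (hoz' : jacobiSym (l o : ℤ) (l z) = -1)
    (hzj : ∀ j, j ≠ z → j ≠ o → jacobiSym (l z : ℤ) (l j) = 1)
    (hjz : ∀ j, j ≠ z → j ≠ o → jacobiSym (l j : ℤ) (l z) = 1)
    (hij : ∀ i j, i ≠ z → j ≠ z → i ≠ j → jacobiSym (l i : ℤ) (l j) = -1)
    (S : Finset (Fin n)) (hz : z ∉ S) (x y c : ℕ)
    (h : (∏ i ∈ S, l i) * x ^ 2 = (∏ i ∈ Sᶜ, l i) * y ^ 2 + c) :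
    (c = 2 → Odd S.card) ∧ (c = 1 → S = ∅) := by
  classical
  set R := Sᶜ.erase z with hR
  have hzc : z ∈ Sᶜ := by simpa using hz
  have hcard : S.card + R.card + 1 = n := by
    have h1 : R.card + 1 = Sᶜ.card := card_erase_add_one hzc
    have h2 := card_add_card_compl S
    rw [Fintype.card_fin] at h2
    omega
  have he : (∏ i ∈ Sᶜ, l i) = l z * ∏ i ∈ R, l i := (mul_prod_erase _ _ hzc).symm
  set d := ∏ i ∈ S, l i with hd
  set e := ∏ i ∈ Sᶜ, l i with hedef
  have hZ : (d : ℤ) * x ^ 2 = e * y ^ 2 + c := by exact_mod_cast h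
  have A : ∀ i, i ∉ S → jacobiSym (c : ℤ) (l i) * jacobiSym (d : ℤ) (l i) ≠ -1 := by
    intro i hi
    rw [← jacobiSym.mul_left]
    apply dl_jac_sq _ _ (d * x : ℤ)
    have : (l i : ℤ) ∣ e := by exact_mod_cast dvd_prod_of_mem l (by simpa using hi : i ∈ Sᶜ)
    have h3 : (c : ℤ) * d - (d * x) ^ 2 = e * (-(d * y ^ 2)) := by linear_combination (-(d:ℤ)) * hZ
    rw [h3]; exact this.mul_right _
  have B : ∀ i, i ∈ S → jacobiSym (c : ℤ) (l i) * jacobiSym (e : ℤ) (l i) ≠ -1 := by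
    intro i hi
    have hiz : i ≠ z := fun h => hz (h ▸ hi)
    have : (l i : ℤ) ∣ d := by exact_mod_cast dvd_prod_of_mem l hi
    have h4 : jacobiSym ((-1) * (c * e)) (l i) ≠ -1 := by
      apply dl_jac_sq _ _ (e * y : ℤ)
      have h3 : (-1) * ((c : ℤ) * e) - (e * y) ^ 2 = d * (-(e * x ^ 2)) := by
        linear_combination ((e:ℤ)) * hZ
      rw [h3]; exact this.mul_right _
    rwa [jacobiSym.mul_left, dl_jac_neg_one _ (hli i hiz), one_mul, jacobiSym.mul_left] at h4
  have Jdz : jacobiSym (d : ℤ) (l z) = if o ∈ S then -1 else 1 := by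
    rw [hd, dl_jac_prod]
    rw [← Finset.prod_ite_eq' S o (fun _ => (-1 : ℤ))]
    apply prod_congr rfl
    intro i hi
    have hiz : i ≠ z := fun h => hz (h ▸ hi)
    by_cases hio : i = o
    · simp [hio, hoz']
    · simp [hio, hjz i hiz hio]
  have Jdi : ∀ i, i ≠ z → i ∉ S → jacobiSym (d : ℤ) (l i) = (-1) ^ S.card := by
    intro i hi hiS
    rw [hd, dl_jac_prod]
    apply prod_eq_pow_card
    intro j hj
    exact hij j i (fun h => hz (h ▸ hj)) hi (fun h => hiS (h ▸ hj))
  have Je : ∀ i, i ∈ S → jacobiSym (e : ℤ) (l i) = jacobiSym (l z : ℤ) (l i) * (-1) ^ R.card := by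
    intro i hiS
    have hiz : i ≠ z := fun h => hz (h ▸ hiS)
    rw [he, Nat.cast_mul, jacobiSym.mul_left, dl_jac_prod]
    congr 1
    apply prod_eq_pow_card
    intro j hj
    have hj' : j ≠ z ∧ j ∉ S := by simpa [hR] using hj
    exact hij j i hj'.1 hiz (fun h => hj'.2 (h ▸ hiS))
  have hRodd : Even S.card → Odd R.card := by
    intro hs
    rw [Nat.odd_iff]; rw [Nat.even_iff] at hs hneven; omega
  constructor
  · rintro rfl
    by_contra hodd
    have hev : Even S.card := Nat.not_odd_iff_even.1 hodd
    have a1 := A z hz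
    rw [Nat.cast_ofNat, dl_jac_two _ (Or.inl hl1), Jdz] at a1
    have hoS : o ∈ S := by
      by_contra hh
      simp [hh] at a1
    have b1 := B o hoS
    rw [Nat.cast_ofNat, dl_jac_two _ (Or.inr (hli o hoz)), Je o hoS, hzo,
      (hRodd hev).neg_one_pow] at b1
    norm_num at b1
  · rintro rfl
    have a1 := A z hz
    rw [Nat.cast_one, jacobiSym.one_left, Jdz] at a1
    have hoS : o ∉ S := by
      intro hh
      simp [hh] at a1
    have a2 := A o hoS
    rw [Nat.cast_one, jacobiSym.one_left, Jdi o hoz hoS] at a2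
    have hev : Even S.card := by
      by_contra hh
      rw [(Nat.not_even_iff_odd.1 hh).neg_one_pow] at a2
      norm_num at a2
    by_contra hne
    obtain ⟨i, hi⟩ := Finset.nonempty_iff_ne_empty.2 hne
    have hiz : i ≠ z := fun h => hz (h ▸ hi)
    have hio : i ≠ o := fun h => hoS (h ▸ hi)
    have b1 := B i hi
    rw [Nat.cast_one, jacobiSym.one_left, Je i hi, hzj i hiz hio, (hRodd hev).neg_one_pow] at b1
    norm_num at b1

open Finset in
lemma dl_z_notMem {n : ℕ} (hneven : Even n) (l : Fin n → ℕ) (z : Fin n)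
    (hl1 : l z % 8 = 3) (hli : ∀ i, i ≠ z → l i % 8 = 5)
    (S : Finset (Fin n)) (x y c : ℕ) (hc : c = 1 ∨ (c = 2 ∧ x % 2 = 1 ∧ y % 2 = 1))
    (h : (∏ i ∈ S, l i) * x ^ 2 = (∏ i ∈ Sᶜ, l i) * y ^ 2 + c) : z ∉ S := by
  classical
  intro hz
  have hcard : (S.erase z).card + Sᶜ.card + 1 = n := by
    have h1 : (S.erase z).card + 1 = S.card := card_erase_add_one hz
    have h2 := card_add_card_compl S
    rw [Fintype.card_fin] at h2
    omega
  have hd : (∏ i ∈ S, l i) = l z * ∏ i ∈ S.erase z, l i := (mul_prod_erase _ _ hz).symm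
  have hT := dl_mod8 l (S.erase z) (fun i hi => hli i (ne_of_mem_erase hi))
  have hC := dl_mod8 l Sᶜ (fun i hi => hli i (fun hh => by
    rw [hh] at hi; exact (mem_compl.1 hi) hz))
  have hd8 : (∏ i ∈ S, l i) % 8 = 3 * ((∏ i ∈ S.erase z, l i) % 8) % 8 := by
    rw [hd, Nat.mul_mod, hl1]
  rw [hT] at hd8
  generalize (∏ i ∈ S, l i) = d at *
  generalize (∏ i ∈ Sᶜ, l i) = e at *
  have key : (d % 8 = 7 ∧ e % 8 = 1) ∨ (d % 8 = 3 ∧ e % 8 = 5) := by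
    rw [Nat.even_iff] at hneven
    simp only [Nat.even_iff] at hd8 hC
    split_ifs at hd8 hC <;> omega
  have h8 : ((d % 8) * ((x % 8) ^ 2)) % 8 = ((e % 8) * ((y % 8) ^ 2) + c) % 8 := by
    have e1 : ((d % 8) * ((x % 8) ^ 2)) ≡ d * x ^ 2 [MOD 8] :=
      (Nat.mod_modEq d 8).mul ((Nat.mod_modEq x 8).pow 2)
    have e2 : ((e % 8) * ((y % 8) ^ 2) + c) ≡ e * y ^ 2 + c [MOD 8] :=
      ((Nat.mod_modEq e 8).mul ((Nat.mod_modEq y 8).pow 2)).add_right c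
    rw [h] at e1
    exact e1.trans e2.symm
  have hx : x % 8 < 8 := Nat.mod_lt _ (by norm_num)
  have hy : y % 8 < 8 := Nat.mod_lt _ (by norm_num)
  rcases hc with rfl | ⟨rfl, hx2, hy2⟩
  · generalize x % 8 = X at *
    generalize y % 8 = Y at *
    rcases key with ⟨k1, k2⟩ | ⟨k1, k2⟩ <;> rw [k1, k2] at h8 <;>
      interval_cases X <;> interval_cases Y <;> omega
  · have hx' : x % 8 % 2 = 1 := by omega
    have hy' : y % 8 % 2 = 1 := by omega
    generalize x % 8 = X at *
    generalize y % 8 = Y at *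
    rcases key with ⟨k1, k2⟩ | ⟨k1, k2⟩ <;> rw [k1, k2] at h8 <;>
      interval_cases X <;> interval_cases Y <;> omega


/-- **Deng–Li family: `a ≡ 4 (mod 8)`.** In the writing `ε = a + b√m` of the fundamental
unit, one has `a = 4a′` with `a′` odd. -/
theorem dengLi_a_mod_eight
    (n : ℕ) (hn : 2 ≤ n) (hneven : Even n)
    (l : Fin n → ℕ) (hlp : ∀ i, (l i).Prime) (hlinj : Function.Injective l)
    (hl1 : l ⟨0, by omega⟩ % 8 = 3)
    (hli : ∀ i : Fin n, i ≠ ⟨0, by omega⟩ → l i % 8 = 5)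
    (hleg12 : jacobiSym (l ⟨0, by omega⟩ : ℤ) (l ⟨1, by omega⟩) = -1)
    (hleg1j : ∀ j : Fin n, 2 ≤ (j : ℕ) → jacobiSym (l ⟨0, by omega⟩ : ℤ) (l j) = 1)
    (hlegij : ∀ i j : Fin n, 1 ≤ (i : ℕ) → i < j → jacobiSym (l i : ℤ) (l j) = -1)
    (m : ℕ) (hm : m = ∏ i, l i)
    (a b : ℕ) (ha : 0 < a) (hb : 0 < b) (hpell : a ^ 2 = m * b ^ 2 + 1)
    (hmin : ∀ a' b' : ℕ, 0 < a' → 0 < b' → a' ^ 2 = m * b' ^ 2 + 1 → a ≤ a') :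
    a % 8 = 4 := by
  set z : Fin n := ⟨0, by omega⟩ with hz
  set o : Fin n := ⟨1, by omega⟩ with ho
  have hoz : o ≠ z := by simp [hz, ho]
  have pos1 : ∀ i : Fin n, i ≠ z → 1 ≤ (i : ℕ) := by
    intro i hi
    rcases Nat.eq_zero_or_pos (i : ℕ) with h | h
    · exact absurd (Fin.ext h) hi
    · exact h
  have pos2 : ∀ i : Fin n, i ≠ z → i ≠ o → 2 ≤ (i : ℕ) := by
    intro i hi hio
    have h1 := pos1 i hi
    have h2 : (i : ℕ) ≠ 1 := fun h => hio (Fin.ext h)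
    omega
  have hodd : ∀ i, Odd (l i) := by
    intro i
    rw [Nat.odd_iff]
    by_cases hi : i = z
    · rw [hi]; omega
    · have := hli i hi; omega
  have hrec : ∀ i j, i ≠ z → jacobiSym (l i : ℤ) (l j) = jacobiSym (l j : ℤ) (l i) := by
    intro i j hi
    have := hli i hi
    exact jacobiSym.quadratic_reciprocity_one_mod_four (by omega) (hodd j)
  have hij : ∀ i j, i ≠ z → j ≠ z → i ≠ j → jacobiSym (l i : ℤ) (l j) = -1 := by
    intro i j hi hj hne
    rcases lt_or_gt_of_ne hne with h | h
    · exact hlegij i j (pos1 i hi) h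
    · rw [hrec i j hi]; exact hlegij j i (pos1 j hj) h
  have hzj : ∀ j, j ≠ z → j ≠ o → jacobiSym (l z : ℤ) (l j) = 1 :=
    fun j h1 h2 => hleg1j j (pos2 j h1 h2)
  have hjz : ∀ j, j ≠ z → j ≠ o → jacobiSym (l j : ℤ) (l z) = 1 :=
    fun j h1 h2 => by rw [hrec j z h1]; exact hzj j h1 h2
  have hoz' : jacobiSym (l o : ℤ) (l z) = -1 := by rw [hrec o z hoz]; exact hleg12
  have hcore := dl_core hneven l z o hoz hl1 hli hleg12 hoz' hzj hjz hij
  have hnotm := dl_z_notMem hneven l z hl1 hli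
  have hmodd : m % 2 = 1 := by
    rw [← Nat.odd_iff, hm]
    exact Finset.prod_induction _ Odd (fun _ _ h1 h2 => h1.mul h2) odd_one (fun i _ => hodd i)
  obtain ⟨v, rfl⟩ : ∃ v, a = v + 1 := ⟨a - 1, by omega⟩
  rcases Nat.mod_two_eq_zero_or_one v with hv | hv
  · -- `a` odd
    exfalso
    obtain ⟨t, rfl⟩ : ∃ t, v = 2 * t := ⟨v / 2, by omega⟩
    have hb2 : b % 2 = 0 := by
      rcases Nat.mod_two_eq_zero_or_one b with h | h
      · exact h
      · exfalso
        have h1 : Odd (m * b ^ 2) := (Nat.odd_iff.2 hmodd).mul ((Nat.odd_iff.2 h).pow)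
        have h2 : m * b ^ 2 = 2 * (2 * t ^ 2 + 2 * t) := by nlinarith
        rw [h2, Nat.odd_iff] at h1
        omega
    obtain ⟨w, rfl⟩ : ∃ w, b = 2 * w := ⟨b / 2, by omega⟩
    have hmul : (t + 1) * t = (∏ i, l i) * w ^ 2 := by rw [← hm]; nlinarith
    obtain ⟨S, x, y, hu, hv', hxy⟩ := dl_decomp l hlp hlinj (t + 1) t w (by simp) hmul
    have heq : (∏ i ∈ S, l i) * x ^ 2 = (∏ i ∈ Sᶜ, l i) * y ^ 2 + 1 := by rw [← hu, ← hv']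
    have hS := (hcore S (hnotm S x y 1 (Or.inl rfl) heq) x y 1 heq).2 rfl
    subst hS
    simp only [Finset.prod_empty, one_mul, Finset.compl_empty, ← hm] at hu hv' heq
    have hwpos : 0 < x * y := by rw [hxy]; omega
    have hx : 0 < x := Nat.pos_of_mul_pos_right hwpos
    have hy : 0 < y := Nat.pos_of_mul_pos_left hwpos
    have := hmin x y hx hy heq
    have h1 : x ≤ x ^ 2 := Nat.le_self_pow (by norm_num) x
    have h2 : 0 < m * y ^ 2 := Nat.mul_pos (by omega) (by positivity)
    omega
  · have hcop : Nat.Coprime (v + 2) v := by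
      have : Nat.Coprime 2 v := Nat.coprime_two_left.2 (Nat.odd_iff.2 hv)
      simpa using this
    have hmul : (v + 2) * v = (∏ i, l i) * b ^ 2 := by rw [← hm]; nlinarith
    obtain ⟨S, x, y, hu, hv', hxy⟩ := dl_decomp l hlp hlinj (v + 2) v b hcop hmul
    have heq : (∏ i ∈ S, l i) * x ^ 2 = (∏ i ∈ Sᶜ, l i) * y ^ 2 + 2 := by rw [← hu, ← hv']
    have hxo : Odd x := by
      have : Odd ((∏ i ∈ S, l i) * x ^ 2) := by rw [← hu, Nat.odd_iff]; omega
      have h2 := (Nat.odd_mul.1 this).2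
      rw [pow_two] at h2; exact (Nat.odd_mul.1 h2).1
    have hyo : Odd y := by
      have : Odd ((∏ i ∈ Sᶜ, l i) * y ^ 2) := by rw [← hv', Nat.odd_iff]; omega
      have h2 := (Nat.odd_mul.1 this).2
      rw [pow_two] at h2; exact (Nat.odd_mul.1 h2).1
    have hzS := hnotm S x y 2 (Or.inr ⟨rfl, Nat.odd_iff.1 hxo, Nat.odd_iff.1 hyo⟩) heq
    have hk := (hcore S hzS x y 2 heq).1 rfl
    have hd := dl_mod8 l S (fun i hi => hli i (fun h => hzS (h ▸ hi)))
    rw [if_neg (Nat.not_even_iff_odd.2 hk)] at hd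
    have hx8 : x ^ 2 % 8 = 1 := by
      obtain ⟨r, rfl⟩ := hxo
      obtain ⟨q, hq⟩ := (Nat.even_mul_succ_self r)
      have : (2 * r + 1) ^ 2 = 8 * q + 1 := by
        have : (2 * r + 1) ^ 2 = 4 * (r * (r + 1)) + 1 := by ring
        rw [this, hq]; ring
      omega
    have : (v + 2) % 8 = 5 := by rw [hu, Nat.mul_mod, hd, hx8]
    omega
end

section
/- One has a² + m·b² ≡ 15 (mod 16) and a·b ≡ 4 (mod 8); equivalently, the fundamental unit satisfies the congruence ε² ≡ −1 + 8√m (mod 16·ℤ[√m]). -/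
lemma DL_split (m x y t : ℕ) (hm : 0 < m) (hxy : Nat.Coprime x y) (h : x * y = m * t ^ 2) :
    ∃ d e r s : ℕ, d * e = m ∧ x = d * r ^ 2 ∧ y = e * s ^ 2 ∧ r * s = t := by
  have hg : m.gcd x * m.gcd y = m := by
    rw [← Nat.Coprime.gcd_mul m hxy, h]; simp
  obtain ⟨x', hx'⟩ := Nat.gcd_dvd_right m x
  obtain ⟨y', hy'⟩ := Nat.gcd_dvd_right m y
  have h1 : x' * y' = t ^ 2 := by
    have : m * (x' * y') = m * t ^ 2 := by
      calc m * (x' * y') = (m.gcd x * m.gcd y) * (x' * y') := by rw [hg]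
        _ = (m.gcd x * x') * (m.gcd y * y') := by ring
        _ = x * y := by rw [← hx', ← hy']
        _ = _ := h
    exact Nat.eq_of_mul_eq_mul_left hm this
  have hc : Nat.Coprime x' y' :=
    Nat.Coprime.coprime_dvd_left ⟨_, by rw [mul_comm]; exact hx'⟩
      (Nat.Coprime.coprime_dvd_right ⟨_, by rw [mul_comm]; exact hy'⟩ hxy)
  obtain ⟨r, hr⟩ := exists_eq_pow_of_mul_eq_pow (k := 2) (by
    rw [Nat.isUnit_iff]; exact hc) h1
  obtain ⟨s, hs⟩ := exists_eq_pow_of_mul_eq_pow (k := 2) (by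
    rw [Nat.isUnit_iff]; exact hc.symm) ((mul_comm y' x').trans h1)
  refine ⟨m.gcd x, m.gcd y, r, s, hg, by rw [← hr]; exact hx', by rw [← hs]; exact hy', ?_⟩
  have : (r * s) ^ 2 = t ^ 2 := by rw [mul_pow, ← hr, ← hs, h1]
  exact Nat.pow_left_injective (n := 2) (by norm_num) this

lemma DL_sym (p : ℕ) (hp : p.Prime) (u s c : ℤ) (h : (p : ℤ) ∣ u * s ^ 2 - c)
    (hc : ¬ (p : ℤ) ∣ c) : jacobiSym u p = jacobiSym c p := by
  have hs : ¬ (p : ℤ) ∣ s := by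
    intro hs
    apply hc
    have h2 : (p : ℤ) ∣ u * s ^ 2 := Dvd.dvd.mul_left (Dvd.dvd.pow hs (by norm_num)) u
    have := dvd_sub h2 h
    simpa using this
  have hg : s.gcd (p : ℤ) = 1 := by
    rw [Int.gcd_comm]
    have : ¬ p ∣ s.natAbs := fun h => hs (Int.natCast_dvd.mpr h)
    exact (Nat.Prime.coprime_iff_not_dvd hp).mpr this
  have h1 : jacobiSym (u * s ^ 2) p = jacobiSym c p :=
    jacobiSym.mod_left' (Int.ModEq.symm ((Int.modEq_iff_dvd).mpr h))
  rw [jacobiSym.mul_left, jacobiSym.sq_one' hg, mul_one] at h1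
  exact h1

lemma DL_two (p : ℕ) (h : p % 8 = 5) : jacobiSym 2 p = -1 := by
  rw [jacobiSym.at_two (Nat.odd_iff.mpr (by omega)), ZMod.χ₈_nat_eq_if_mod_eight]
  rw [if_neg (by omega), if_neg (by omega)]

lemma DL_neg (p : ℕ) (h : p % 8 = 5) (c : ℤ) : jacobiSym (-c) p = jacobiSym c p := by
  rw [← neg_one_mul, jacobiSym.mul_left, jacobiSym.at_neg_one (Nat.odd_iff.mpr (by omega)),
    ZMod.χ₄_nat_one_mod_four (by omega), one_mul]

section
variable {ι : Type*} [DecidableEq ι]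

lemma DL_prod_mod (l : ι → ℕ) (B : Finset ι) (h : ∀ i ∈ B, l i % 8 = 5) :
    (Even B.card → (∏ i ∈ B, l i) % 8 = 1) ∧ (Odd B.card → (∏ i ∈ B, l i) % 8 = 5) := by
  have h1 : (∏ i ∈ B, l i) % 8 = 5 ^ B.card % 8 := by
    rw [Finset.prod_nat_mod, Finset.prod_congr rfl h, Finset.prod_const]
  rw [h1]
  constructor
  · rintro ⟨k, hk⟩
    rw [hk, ← two_mul, pow_mul, Nat.pow_mod]; simp
  · rintro ⟨k, hk⟩
    rw [hk, pow_succ, pow_mul, Nat.mul_mod, Nat.pow_mod]; simp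

lemma DL_prod_jac (l : ι → ℕ) (B : Finset ι) (p : ℕ)
    (h : ∀ i ∈ B, jacobiSym (l i : ℤ) p = -1) :
    jacobiSym ((∏ i ∈ B, l i : ℕ) : ℤ) p = (-1) ^ B.card := by
  induction B using Finset.induction_on with
  | empty => simp
  | insert i B hi ih =>
    rw [Finset.prod_insert hi, Finset.card_insert_of_notMem hi]
    push_cast
    rw [jacobiSym.mul_left, h i (by simp)]
    have := ih (fun j hj => h j (by simp [hj]))
    push_cast at this
    rw [this, pow_succ]; ring

/-- Structure data: a partition `S ∪ T` with a solution of `e s² - d r² = c`. -/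
lemma DL_main [Fintype ι] (l : ι → ℕ) (z o : ι) (hzo : o ≠ z)
    (hlp : ∀ i, (l i).Prime) (hz : l z % 8 = 3) (hli : ∀ i, i ≠ z → l i % 8 = 5)
    (hcard : Odd (Finset.univ.erase z).card)
    (ho : jacobiSym (l z : ℤ) (l o) = -1)
    (hj : ∀ j, j ≠ z → j ≠ o → jacobiSym (l z : ℤ) (l j) = 1)
    (hij : ∀ i j, i ≠ z → j ≠ z → i ≠ j → jacobiSym (l i : ℤ) (l j) = -1)
    (d e r s c : ℕ) (hde : d * e = ∏ i, l i) (hc : c = 1 ∨ c = 2)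
    (heq : e * s ^ 2 = d * r ^ 2 + c) :
    (c = 1 → e = 1 ∨ d = 1) ∧ (c = 2 → Odd r → Odd s → d % 8 = 3) := by
  obtain ⟨S, T, b1, c1, hST, hdis, hbc, hd, he⟩ := mul_eq_mul_prime_prod (x := d) (y := e) (a := 1)
    (s := Finset.univ) (p := l) (fun i _ => (hlp i).prime) (by rw [one_mul]; exact hde)
  have hb1 : b1 = 1 := Nat.eq_one_of_mul_eq_one_right hbc.symm
  have hc1 : c1 = 1 := Nat.eq_one_of_mul_eq_one_left hbc.symm
  rw [hb1, one_mul] at hd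
  rw [hc1, one_mul] at he
  -- symbol relations
  have hpc : ∀ i, i ≠ z → ¬ ((l i : ℕ) : ℤ) ∣ (c : ℤ) := by
    intro i hi h
    have h5 := hli i hi
    have h1 := Int.natCast_dvd_natCast.mp h
    have h2 := Nat.le_of_dvd (by omega) h1
    omega
  have heqz : (e : ℤ) * (s : ℤ) ^ 2 = d * (r : ℤ) ^ 2 + c := by exact_mod_cast heq
  have hS : ∀ i ∈ S, i ≠ z → jacobiSym (e : ℤ) (l i) = jacobiSym (c : ℤ) (l i) := by
    intro i hi hiz
    apply DL_sym _ (hlp i) _ s _ _ (hpc i hiz)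
    rw [heqz, add_sub_cancel_right]
    apply Dvd.dvd.mul_right
    rw [hd]
    exact Int.natCast_dvd_natCast.mpr (Finset.dvd_prod_of_mem l hi)
  have hT : ∀ i ∈ T, i ≠ z → jacobiSym (d : ℤ) (l i) = jacobiSym (c : ℤ) (l i) := by
    intro i hi hiz
    rw [← DL_neg _ (hli i hiz) (c : ℤ)]
    apply DL_sym _ (hlp i) _ r _ _ (by rw [dvd_neg]; exact hpc i hiz)
    rw [sub_neg_eq_add, ← heqz]
    apply Dvd.dvd.mul_right
    rw [he]
    exact Int.natCast_dvd_natCast.mpr (Finset.dvd_prod_of_mem l hi)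
  -- evaluation of symbols of products
  have hev0 : ∀ U : Finset ι, z ∉ U → ∀ i, i ≠ z → i ∉ U →
      jacobiSym ((∏ i ∈ U, l i : ℕ) : ℤ) (l i) = (-1) ^ U.card := by
    intro U hU i hiz hiU
    apply DL_prod_jac
    intro j hjU
    exact hij j i (fun h => hU (h ▸ hjU)) hiz (fun h => hiU (h ▸ hjU))
  have hev1 : ∀ U : Finset ι, z ∈ U → ∀ i, i ≠ z → i ∉ U →
      jacobiSym ((∏ i ∈ U, l i : ℕ) : ℤ) (l i)
        = jacobiSym (l z : ℤ) (l i) * (-1) ^ (U.erase z).card := by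
    intro U hU i hiz hiU
    rw [← Finset.mul_prod_erase U l hU]
    push_cast
    rw [jacobiSym.mul_left]
    have := hev0 (U.erase z) (by simp) i hiz (by simp [hiU])
    push_cast at this
    rw [this]
  have hcov : ∀ i, i ∈ S ∨ i ∈ T := fun i => by
    have : i ∈ S ∪ T := hST ▸ Finset.mem_univ i
    simpa using this
  have hSnT : ∀ i ∈ S, i ∉ T := fun i h => Finset.disjoint_left.mp hdis h
  have hTnS : ∀ i ∈ T, i ∉ S := fun i h => Finset.disjoint_right.mp hdis h
  have hcards : Odd ((S.erase z).card + (T.erase z).card) := by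
    rw [← Finset.card_union_of_disjoint
      (hdis.mono (Finset.erase_subset _ _) (Finset.erase_subset _ _)),
      ← Finset.erase_union_distrib, hST]
    exact hcard
  -- general combinatorial lemma for c = 1
  have key : ∀ A B : Finset ι, z ∈ A → (∀ i, i ∈ A ∨ i ∈ B) → (∀ i ∈ A, i ∉ B) →
      (∀ i ∈ B, i ∉ A) → Odd ((A.erase z).card + B.card) →
      (∀ i ∈ A, i ≠ z → jacobiSym ((∏ i ∈ B, l i : ℕ) : ℤ) (l i) = 1) →
      (∀ i ∈ B, i ≠ z → jacobiSym ((∏ i ∈ A, l i : ℕ) : ℤ) (l i) = 1) → B = ∅ := by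
    intro A B hzA hcv hAB hBA hodd h1 h2
    have hzB := hAB z hzA
    by_contra hne
    rcases Nat.even_or_odd B.card with hB | hB
    · have hA : Odd (A.erase z).card := by
        rw [Nat.odd_add] at hodd; exact hodd.mpr hB
      have hall : ∀ i ∈ B, i = o := by
        intro i hi
        have hiz : i ≠ z := fun h => hzB (h ▸ hi)
        have h3 := h2 i hi hiz
        rw [hev1 A hzA i hiz (hBA i hi), hA.neg_one_pow] at h3
        by_contra hio
        rw [hj i hiz hio] at h3
        norm_num at h3
      have hle : B.card ≤ 1 := by
        rw [Finset.card_le_one]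
        intro i hi j hj
        rw [hall i hi, hall j hj]
      have hpos : 0 < B.card := Finset.card_pos.mpr (Finset.nonempty_iff_ne_empty.mpr hne)
      obtain ⟨k, hk⟩ := hB
      omega
    · have hAe : A.erase z = ∅ := by
        by_contra hA
        obtain ⟨i, hi⟩ := Finset.nonempty_iff_ne_empty.mpr hA
        obtain ⟨hiz, hiA⟩ := Finset.mem_erase.mp hi
        have h3 := h1 i hiA hiz
        rw [hev0 B hzB i hiz (hAB i hiA), hB.neg_one_pow] at h3
        norm_num at h3
      have hoB : o ∈ B := by
        rcases hcv o with h | h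
        · have : o ∈ A.erase z := Finset.mem_erase.mpr ⟨hzo, h⟩
          rw [hAe] at this
          simp at this
        · exact h
      have h3 := h2 o hoB hzo
      rw [hev1 A hzA o hzo (hBA o hoB), hAe, ho] at h3
      norm_num at h3
  constructor
  · intro hc1
    rw [hc1] at hS hT
    simp only [Nat.cast_one, jacobiSym.one_left] at hS hT
    rw [he] at hS
    rw [hd] at hT
    rcases hcov z with hz1 | hz1
    · left
      have := key S T hz1 hcov hSnT hTnS
        (by rw [Finset.erase_eq_of_notMem (hSnT z hz1)] at hcards; exact hcards) hS hT
      rw [he, this]; simp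
    · right
      have := key T S hz1 (fun i => (hcov i).symm) hTnS hSnT
        (by rw [Finset.erase_eq_of_notMem (hTnS z hz1), add_comm] at hcards; exact hcards) hT hS
      rw [hd, this]; simp
  · intro hc2 hr hs
    have sq8 : ∀ x : ℕ, Odd x → x ^ 2 % 8 = 1 := by
      intro x hx
      have : x % 8 = 1 ∨ x % 8 = 3 ∨ x % 8 = 5 ∨ x % 8 = 7 := by
        have := Nat.odd_iff.mp hx; omega
      rcases this with h | h | h | h <;> rw [Nat.pow_mod, h]
    have h8 : e % 8 = (d + 2) % 8 := by
      have h1 : (e * s ^ 2) % 8 = e % 8 := by rw [Nat.mul_mod, sq8 s hs]; simp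
      have h2 : (d * r ^ 2) % 8 = d % 8 := by rw [Nat.mul_mod, sq8 r hr]; simp
      omega
    have m0 : ∀ U : Finset ι, z ∉ U → (Even U.card → (∏ i ∈ U, l i) % 8 = 1) ∧
        (Odd U.card → (∏ i ∈ U, l i) % 8 = 5) := fun U hU =>
      DL_prod_mod l U (fun i hi => hli i (fun h => hU (h ▸ hi)))
    have m1 : ∀ U : Finset ι, z ∈ U → (Even (U.erase z).card → (∏ i ∈ U, l i) % 8 = 3) ∧
        (Odd (U.erase z).card → (∏ i ∈ U, l i) % 8 = 7) := by
      intro U hU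
      rw [← Finset.mul_prod_erase U l hU]
      obtain ⟨h1, h2⟩ := m0 (U.erase z) (by simp)
      exact ⟨fun h => by rw [Nat.mul_mod, hz, h1 h], fun h => by rw [Nat.mul_mod, hz, h2 h]⟩
    rw [Nat.odd_add] at hcards
    rcases hcov z with hz1 | hz1
    · have hzT := hSnT z hz1
      rw [Finset.erase_eq_of_notMem hzT] at hcards
      rcases Nat.even_or_odd (S.erase z).card with hA | hA
      · rw [hd]; exact (m1 S hz1).1 hA
      · exfalso
        have hB := hcards.mp hA
        obtain ⟨i, hi⟩ := Finset.card_pos.mp hA.pos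
        obtain ⟨hiz, hiS⟩ := Finset.mem_erase.mp hi
        have h3 := hS i hiS hiz
        rw [he, hev0 T hzT i hiz (hSnT i hiS), hB.neg_one_pow, hc2] at h3
        have h4 := DL_two _ (hli i hiz)
        push_cast at h3
        rw [h4] at h3
        norm_num at h3
    · exfalso
      have hzS := hTnS z hz1
      rw [Finset.erase_eq_of_notMem hzS] at hcards
      have a0 := m0 S hzS
      have a1 := m1 T hz1
      rw [← hd] at a0
      rw [← he] at a1
      rcases Nat.even_or_odd S.card with hA | hA
      · have hB : Odd (T.erase z).card := by
          rw [← Nat.not_even_iff_odd]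
          intro h
          exact (Nat.not_odd_iff_even.mpr hA) (hcards.mpr h)
        have := a0.1 hA
        have := a1.2 hB
        omega
      · have := a0.2 hA
        have := a1.1 (hcards.mp hA)
        omega
end

/-- **Deng–Li family: the key 2-adic congruence on the fundamental unit.** One has
`a² + m·b² ≡ 15 (mod 16)` and `a·b ≡ 4 (mod 8)`; equivalently
`ε² ≡ −1 + 8√m (mod 16·ℤ[√m])`. -/
theorem dengLi_fundamental_unit_congruence
    (n : ℕ) (hn : 2 ≤ n) (hneven : Even n)
    (l : Fin n → ℕ) (hlp : ∀ i, (l i).Prime) (hlinj : Function.Injective l)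
    (hl1 : l ⟨0, by omega⟩ % 8 = 3)
    (hli : ∀ i : Fin n, i ≠ ⟨0, by omega⟩ → l i % 8 = 5)
    (hleg12 : jacobiSym (l ⟨0, by omega⟩ : ℤ) (l ⟨1, by omega⟩) = -1)
    (hleg1j : ∀ j : Fin n, 2 ≤ (j : ℕ) → jacobiSym (l ⟨0, by omega⟩ : ℤ) (l j) = 1)
    (hlegij : ∀ i j : Fin n, 1 ≤ (i : ℕ) → i < j → jacobiSym (l i : ℤ) (l j) = -1)
    (m : ℕ) (hm : m = ∏ i, l i)
    (a b : ℕ) (ha : 0 < a) (hb : 0 < b) (hpell : a ^ 2 = m * b ^ 2 + 1)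
    (hmin : ∀ a' b' : ℕ, 0 < a' → 0 < b' → a' ^ 2 = m * b' ^ 2 + 1 → a ≤ a') :
    (a ^ 2 + m * b ^ 2) % 16 = 15 ∧ (a * b) % 8 = 4 ∧
    ∃ δ : Zsqrtd (m : ℤ), (⟨(a : ℤ), (b : ℤ)⟩ : Zsqrtd (m : ℤ)) ^ 2
        = -1 + 8 * Zsqrtd.sqrtd + 16 * δ := by
  have hzo : (⟨1, by omega⟩ : Fin n) ≠ ⟨0, by omega⟩ := by simp
  have hcard : Odd (Finset.univ.erase (⟨0, by omega⟩ : Fin n)).card := by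
    rw [Finset.card_erase_of_mem (Finset.mem_univ _), Finset.card_univ, Fintype.card_fin]
    exact Nat.Even.sub_odd (by omega) hneven odd_one
  have hj : ∀ j : Fin n, j ≠ ⟨0, by omega⟩ → j ≠ ⟨1, by omega⟩ →
      jacobiSym (l ⟨0, by omega⟩ : ℤ) (l j) = 1 := by
    intro j h0 h1
    apply hleg1j
    simp only [ne_eq, Fin.ext_iff] at h0 h1
    omega
  have hij : ∀ i j : Fin n, i ≠ ⟨0, by omega⟩ → j ≠ ⟨0, by omega⟩ → i ≠ j →
      jacobiSym (l i : ℤ) (l j) = -1 := by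
    intro i j hi hj' hne
    have hi5 := hli i hi
    have hj5 := hli j hj'
    simp only [ne_eq, Fin.ext_iff] at hi hj'
    rcases lt_or_gt_of_ne hne with h | h
    · exact hlegij i j (by omega) h
    · rw [jacobiSym.quadratic_reciprocity_one_mod_four (by omega)
        (Nat.odd_iff.mpr (by omega))]
      exact hlegij j i (by omega) h
  have main := DL_main l ⟨0, by omega⟩ ⟨1, by omega⟩ hzo hlp hl1 hli hcard hleg12 hj hij
  have hm8 : m % 8 = 7 := by
    rw [hm, ← Finset.mul_prod_erase _ l (Finset.mem_univ (⟨0, by omega⟩ : Fin n)), Nat.mul_mod, hl1,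
      (DL_prod_mod l _ (fun i hi => hli i (Finset.ne_of_mem_erase hi))).2 hcard]
  have hmpos : 0 < m := by omega
  have ha2 : 2 ≤ a := by
    by_contra h
    have : a = 1 := by omega
    rw [this] at hpell
    have : 0 < m * b ^ 2 := by positivity
    omega
  -- the parity of b and the residue of a
  have hres : a % 8 = 4 ∧ b % 2 = 1 := by
    rcases Nat.even_or_odd a with ⟨k, hk⟩ | ⟨k, hk⟩
    · have hbodd : Odd b := by
        by_contra h
        rw [Nat.not_odd_iff_even] at h
        obtain ⟨t, ht⟩ := h
        have h1 : 2 * (2 * k ^ 2) = 2 * (2 * m * t ^ 2) + 1 := by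
          rw [hk, ht] at hpell
          nlinarith
        omega
      have hprod : (a - 1) * (a + 1) = m * b ^ 2 := by
        obtain ⟨x, rfl⟩ : ∃ x, a = x + 1 := ⟨a - 1, by omega⟩
        simp only [Nat.add_sub_cancel]
        nlinarith
      have hcop : Nat.Coprime (a - 1) (a + 1) := by
        have h2 : a + 1 = 2 + (a - 1) := by omega
        rw [h2, Nat.coprime_add_self_right, Nat.coprime_comm, Nat.coprime_two_left]
        exact Nat.odd_iff.mpr (by omega)
      obtain ⟨d, e, r, s, hde, hx, hy, hrs⟩ := DL_split m _ _ b hmpos hcop hprod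
      rw [← hrs, Nat.odd_mul] at hbodd
      have h3 := (main d e r s 2 (hde.trans hm) (Or.inr rfl) (by omega)).2 rfl hbodd.1 hbodd.2
      have h4 : (d * r ^ 2) % 8 = 3 := by
        obtain ⟨q, hq⟩ := hbodd.1
        have : r % 8 = 1 ∨ r % 8 = 3 ∨ r % 8 = 5 ∨ r % 8 = 7 := by omega
        rcases this with h | h | h | h <;> rw [Nat.mul_mod, Nat.pow_mod, h, h3]
      refine ⟨by omega, ?_⟩
      rw [← hrs]
      exact Nat.odd_iff.mp (Nat.odd_mul.mpr hbodd)
    · exfalso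
      have hbeven : Even b := by
        by_contra h
        rw [Nat.not_even_iff_odd] at h
        have h1 : Odd (m * b ^ 2) := Nat.odd_mul.mpr ⟨Nat.odd_iff.mpr (by omega), h.pow⟩
        obtain ⟨q, hq⟩ := h1
        rw [hk, hq] at hpell
        have : 2 * (2 * k ^ 2 + 2 * k) + 1 = 2 * q + 1 + 1 := by nlinarith
        omega
      obtain ⟨t, ht⟩ := hbeven
      have hprod : k * (k + 1) = m * t ^ 2 := by
        rw [hk, ht] at hpell
        nlinarith
      have hcop : Nat.Coprime k (k + 1) := by simp
      obtain ⟨d, e, r, s, hde, hx, hy, hrs⟩ := DL_split m _ _ t hmpos hcop hprod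
      have htpos : 0 < r * s := by rw [hrs]; omega
      have hrpos : 0 < r := Nat.pos_of_mul_pos_right htpos
      have hspos : 0 < s := Nat.pos_of_mul_pos_left htpos
      rcases (main d e r s 1 (hde.trans hm) (Or.inl rfl) (by omega)).1 rfl with h | h
      · rw [h, mul_one] at hde
        rw [h, one_mul] at hy
        rw [hde] at hx
        have h5 := hmin s r hspos hrpos (by omega)
        have : s ≤ s ^ 2 := Nat.le_self_pow (by norm_num) s
        omega
      · rw [h, one_mul] at hde hx
        rw [hde] at hy
        have h6 : (m * s ^ 2) % 4 = (r ^ 2 + 1) % 4 := by rw [← hy, hx]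
        rw [Nat.mul_mod, Nat.add_mod, Nat.pow_mod, Nat.pow_mod r, show m % 4 = 3 by omega] at h6
        have hs4 : s % 4 < 4 := Nat.mod_lt _ (by norm_num)
        have hr4 : r % 4 < 4 := Nat.mod_lt _ (by norm_num)
        interval_cases s % 4 <;> interval_cases r % 4 <;> simp at h6
  obtain ⟨ha4, hb1⟩ := hres
  obtain ⟨u, hu⟩ : ∃ u, a = 8 * u + 4 := ⟨a / 8, by omega⟩
  obtain ⟨v, hv⟩ : ∃ v, b = 2 * v + 1 := ⟨b / 2, by omega⟩
  have hab : a * b = 8 * (2 * u * v + u + v) + 4 := by rw [hu, hv]; ring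
  have hsq : a ^ 2 = 16 * (4 * u ^ 2 + 4 * u + 1) := by rw [hu]; ring
  refine ⟨by omega, by omega, ⟨⟨8 * u ^ 2 + 8 * u + 2, 2 * u * v + u + v⟩, ?_⟩⟩
  have hpz : (a : ℤ) ^ 2 = m * (b : ℤ) ^ 2 + 1 := by exact_mod_cast hpell
  have habz : (a : ℤ) * b = 8 * (2 * u * v + u + v) + 4 := by exact_mod_cast hab
  have hsqz : (a : ℤ) ^ 2 = 16 * (4 * u ^ 2 + 4 * u + 1) := by exact_mod_cast hsq
  have e8 : (8 : Zsqrtd (m : ℤ)) = ((8 : ℤ) : Zsqrtd (m : ℤ)) := by norm_num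
  have e16 : (16 : Zsqrtd (m : ℤ)) = ((16 : ℤ) : Zsqrtd (m : ℤ)) := by norm_num
  rw [e8, e16, pow_two]
  ext
  · simp
    nlinarith
  · simp
    nlinarith
end

section
/- There exists an element α ∈ K = ℚ(√m) such that α²·ε = 2·ℓ₂. -/
open NumberField

lemma dl_split (u v m b : ℕ) (hb : 0 < b) (hm : 0 < m) (hc : Nat.Coprime u v) (h : u * v = m * b ^ 2) :
    ∃ d e x y : ℕ, d * e = m ∧ u = d * x ^ 2 ∧ v = e * y ^ 2 ∧ x * y = b := by
  have hde : Nat.gcd u m * Nat.gcd v m = m := by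
    rw [Nat.gcd_comm u, Nat.gcd_comm v, ← Nat.Coprime.gcd_mul m hc, h]
    exact Nat.gcd_eq_left (Dvd.intro _ rfl)
  obtain ⟨u', hu'⟩ := Nat.gcd_dvd_left u m
  obtain ⟨v', hv'⟩ := Nat.gcd_dvd_left v m
  generalize Nat.gcd u m = d at *
  generalize Nat.gcd v m = e at *
  have huv : u' * v' = b ^ 2 := by
    apply Nat.eq_of_mul_eq_mul_left hm
    rw [← h, hu', hv', ← hde]; ring
  have hc' : Nat.Coprime u' v' :=
    Nat.Coprime.coprime_dvd_left (Dvd.intro_left _ hu'.symm)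
      (Nat.Coprime.coprime_dvd_right (Dvd.intro_left _ hv'.symm) hc)
  obtain ⟨x, hx⟩ := exists_eq_pow_of_mul_eq_pow (Nat.isUnit_iff.mpr hc') huv
  obtain ⟨y, hy⟩ := exists_eq_pow_of_mul_eq_pow (Nat.isUnit_iff.mpr hc'.symm) ((mul_comm _ _).trans huv)
  refine ⟨d, e, x, y, hde, by rw [hu', hx], by rw [hv', hy], ?_⟩
  rw [hx, hy, ← mul_pow] at huv
  exact Nat.pow_left_injective (n := 2) (by norm_num) huv

lemma dl_signs {ι : Type} [DecidableEq ι] [Fintype ι] (i0 i1 : ι) (h01 : i0 ≠ i1) (D E : Finset ι)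
    (hU : D ∪ E = Finset.univ) (hdis : Disjoint D E) (hev : Even (Fintype.card ι)) (s : ℤ)
    (hE0 : i0 ∈ E → (if i1 ∈ D then (-1 : ℤ) else 1) = s)
    (hD0 : i0 ∈ D → -(if i1 ∈ E then (-1 : ℤ) else 1) = s)
    (hE : ∀ j ∈ E, j ≠ i0 →
      (if i0 ∈ D then (if j = i1 then (1 : ℤ) else -1) else 1) * (-1) ^ D.card = s)
    (hD : ∀ j ∈ D, j ≠ i0 →
      (if i0 ∈ E then (if j = i1 then (1 : ℤ) else -1) else 1) * (-1) ^ E.card = s) :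
    (s = 1 → D = ∅) ∧ (s = -1 → D = {i1}) := by
  have hcard : Even (D.card + E.card) := by
    rw [← Finset.card_union_of_disjoint hdis, hU, Finset.card_univ]; exact hev
  have hmem : ∀ j, j ∈ D ∨ j ∈ E := fun j => by
    have := Finset.mem_univ j
    rw [← hU, Finset.mem_union] at this; exact this
  have hnot : ∀ j, j ∈ D → j ∉ E := fun j h1 h2 => Finset.disjoint_left.mp hdis h1 h2
  have hpow : ((-1 : ℤ) ^ D.card = 1 ∧ (-1 : ℤ) ^ E.card = 1) ∨
      ((-1 : ℤ) ^ D.card = -1 ∧ (-1 : ℤ) ^ E.card = -1) := by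
    rcases Nat.even_or_odd D.card with h | h
    · left; exact ⟨h.neg_one_pow, ((Nat.even_add.mp hcard).mp h).neg_one_pow⟩
    · right
      refine ⟨h.neg_one_pow, Odd.neg_one_pow ?_⟩
      rw [← Nat.not_even_iff_odd] at h ⊢
      exact fun h' => h ((Nat.even_add.mp hcard).mpr h')
  have hE1 : E = {i1} → (-1 : ℤ) ^ E.card = -1 := fun h => by simp [h]
  have hE2 : E = ∅ → (-1 : ℤ) ^ E.card = 1 := fun h => by simp [h]
  constructor
  · rintro rfl
    rcases hmem i0 with h0 | h0
    · exfalso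
      have h0' := hnot _ h0
      have h1 : i1 ∈ E := by
        by_contra h; have := hD0 h0; simp [h] at this
      have a1 := hE i1 h1 h01.symm
      simp only [h0, if_true, one_mul] at a1
      have hEe : E = {i1} := by
        ext j; simp only [Finset.mem_singleton]
        refine ⟨fun hj => ?_, fun hj => hj ▸ h1⟩
        by_contra hne
        have := hE j hj (fun h => h0' (h ▸ hj))
        simp [h0, hne, a1] at this
      have := hE1 hEe
      rcases hpow with h | h <;> linarith [h.1, h.2]
    · have h0' : i0 ∉ D := fun h => hnot _ h h0
      have h1 : i1 ∉ D := by
        intro h; have := hE0 h0; simp [h] at this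
      have h1E := (hmem i1).resolve_left h1
      have a1 := hE i1 h1E h01.symm
      simp only [h0', if_false, one_mul] at a1
      ext j
      simp only [Finset.notMem_empty, iff_false]
      intro hj
      have a2 := hD j hj (fun h => h0' (h ▸ hj))
      have hne : j ≠ i1 := fun h => h1 (h ▸ hj)
      simp only [h0, hne, if_true, if_false] at a2
      rcases hpow with h | h <;> linarith [h.1, h.2]
  · rintro rfl
    rcases hmem i0 with h0 | h0
    · exfalso
      have h0' := hnot _ h0
      have h1 : i1 ∉ E := by
        intro h; have := hD0 h0; simp [h] at this
      have h1D := (hmem i1).resolve_right h1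
      have a1 := hD i1 h1D h01.symm
      simp only [h0', if_false, one_mul] at a1
      have hEe : E = ∅ := by
        ext j; simp only [Finset.notMem_empty, iff_false]
        intro hj
        have a2 := hE j hj (fun h => h0' (h ▸ hj))
        have hne : j ≠ i1 := fun h => h1 (h ▸ hj)
        simp only [h0, hne, if_true, if_false] at a2
        rcases hpow with h | h <;> linarith [h.1, h.2]
      linarith [hE2 hEe]
    · have h0' : i0 ∉ D := fun h => hnot _ h h0
      have h1 : i1 ∈ D := by
        by_contra h; have := hE0 h0; simp [h] at this
      have a1 := hD i1 h1 h01.symm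
      simp only [h0, if_true, one_mul] at a1
      ext j; simp only [Finset.mem_singleton]
      refine ⟨fun hj => ?_, fun hj => hj ▸ h1⟩
      by_contra hne
      have := hD j hj (fun h => h0' (h ▸ hj))
      simp [h0, hne, a1] at this

lemma dl_prod {ι : Type} (D : Finset ι) (l : ι → ℕ) (p : ℕ) :
    jacobiSym ((∏ i ∈ D, l i : ℕ) : ℤ) p = ∏ i ∈ D, jacobiSym (l i : ℤ) p := by
  classical
  induction D using Finset.induction_on with
  | empty => simp [jacobiSym.one_left]
  | insert i s hi ih =>
    rw [Finset.prod_insert hi, Finset.prod_insert hi, Nat.cast_mul, jacobiSym.mul_left, ih]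

/-- if `d x² ≡ c` mod `p` with `(c/p) ≠ 0` then `(d/p) = (c/p)`. -/
lemma dl_res (d x c : ℤ) (p : ℕ) (h : (p : ℤ) ∣ d * x ^ 2 - c) (hc : jacobiSym c p ≠ 0) :
    jacobiSym d p = jacobiSym c p := by
  have h1 : jacobiSym (d * x ^ 2) p = jacobiSym c p := by
    rw [jacobiSym.mod_left, jacobiSym.mod_left c]
    congr 1
    exact Int.emod_eq_emod_iff_emod_sub_eq_zero.mpr (Int.emod_eq_zero_of_dvd h)
  rw [jacobiSym.mul_left, jacobiSym.pow_left] at h1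
  rcases jacobiSym.trichotomy x p with hx | hx | hx <;> rw [hx] at h1
  · simp at h1; exact absurd h1.symm hc
  · simpa using h1
  · simpa using h1

lemma dl_main (n : ℕ) (hneven : Even n) (i0 i1 : Fin n) (hi0 : (i0 : ℕ) = 0) (hi1 : (i1 : ℕ) = 1)
    (l : Fin n → ℕ) (hlp : ∀ i, (l i).Prime)
    (hl1 : l i0 % 8 = 3)
    (hli : ∀ i : Fin n, i ≠ i0 → l i % 8 = 5)
    (hleg12 : jacobiSym (l i0 : ℤ) (l i1) = -1)
    (hleg1j : ∀ j : Fin n, 2 ≤ (j : ℕ) → jacobiSym (l i0 : ℤ) (l j) = 1)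
    (hlegij : ∀ i j : Fin n, 1 ≤ (i : ℕ) → i < j → jacobiSym (l i : ℤ) (l j) = -1)
    (d e x y c : ℕ) (s : ℤ) (hde : d * e = ∏ i, l i) (h : d * x ^ 2 = e * y ^ 2 + c)
    (hs : s = 1 ∨ s = -1) (hcs : ∀ i, jacobiSym (c : ℤ) (l i) = s) :
    (s = 1 → d = 1) ∧ (s = -1 → d = l i1) := by
  have hs0 : s ≠ 0 := by rcases hs with h | h <;> simp [h]
  obtain ⟨D, E, b, c', hU, hdis, hbc, hd, he⟩ :=
    mul_eq_mul_prime_prod (s := Finset.univ) (p := l) (a := 1) (x := d) (y := e)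
      (fun i _ => (hlp i).prime) (by rw [hde, one_mul])
  obtain ⟨rfl, rfl⟩ : b = 1 ∧ c' = 1 := by
    have := hbc.symm; exact mul_eq_one.mp this
  rw [one_mul] at hd he
  have hz : (d : ℤ) * x ^ 2 = e * y ^ 2 + c := by exact_mod_cast h
  -- residue conditions
  have rE : ∀ j ∈ E, ∏ i ∈ D, jacobiSym (l i : ℤ) (l j) = s := fun j hj => by
    rw [← dl_prod, ← hd, ← hcs j]
    refine dl_res d x c _ ?_ (by rw [hcs]; exact hs0)
    have : (l j : ℤ) ∣ e := by
      rw [he]; exact_mod_cast Finset.dvd_prod_of_mem l hj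
    have h2 : (d : ℤ) * x ^ 2 - c = e * y ^ 2 := by linarith
    rw [h2]; exact this.mul_right _
  have rD : ∀ j ∈ D, jacobiSym (-1) (l j) * ∏ i ∈ E, jacobiSym (l i : ℤ) (l j) = s := fun j hj => by
    rw [← dl_prod, ← he, ← hcs j, ← jacobiSym.mul_left]
    refine dl_res _ y c _ ?_ (by rw [hcs]; exact hs0)
    have : (l j : ℤ) ∣ d := by
      rw [hd]; exact_mod_cast Finset.dvd_prod_of_mem l hj
    have h2 : (-1 * e : ℤ) * y ^ 2 - c = -(d * x ^ 2) := by linarith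
    rw [h2]; exact (this.mul_right _).neg_right
  have h01 : i0 ≠ i1 := fun h => by rw [h, hi1] at hi0; omega
  have hpos : ∀ j : Fin n, j ≠ i0 → 1 ≤ (j : ℕ) := fun j hj => by
    by_contra hlt
    exact hj (Fin.ext (by omega))
  have hodd : ∀ j, l j % 2 = 1 := fun j => by
    by_cases hj : j = i0
    · rw [hj]; omega
    · have := hli j hj; omega
  have f0 : ∀ j, j ≠ i0 → jacobiSym (l i0 : ℤ) (l j) = if j = i1 then -1 else 1 := fun j hj => by
    split_ifs with h1
    · rw [h1]; exact hleg12
    · apply hleg1j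
      have := hpos j hj
      by_contra hlt
      exact h1 (Fin.ext (by omega))
  have recip : ∀ i j, j ≠ i0 → jacobiSym (l j : ℤ) (l i) = jacobiSym (l i : ℤ) (l j) :=
    fun i j hj => jacobiSym.quadratic_reciprocity_one_mod_four (by have := hli j hj; omega)
      (Nat.odd_iff.mpr (hodd i))
  have f1 : ∀ i j, i ≠ i0 → j ≠ i0 → i ≠ j → jacobiSym (l i : ℤ) (l j) = -1 :=
    fun i j hi hj hij => by
      rcases lt_or_gt_of_ne hij with hlt | hlt
      · exact hlegij i j (hpos i hi) hlt
      · rw [recip j i hi]; exact hlegij j i (hpos j hj) hlt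
  have n1 : ∀ j, j ≠ i0 → jacobiSym (-1) (l j) = 1 := fun j hj => by
    rw [jacobiSym.at_neg_one (Nat.odd_iff.mpr (hodd j)), ZMod.χ₄_nat_one_mod_four]
    have := hli j hj; omega
  have n0 : jacobiSym (-1) (l i0) = -1 := by
    rw [jacobiSym.at_neg_one (Nat.odd_iff.mpr (hodd i0)), ZMod.χ₄_nat_three_mod_four]
    omega
  have p0 : ∀ A : Finset (Fin n), i0 ∉ A →
      ∏ i ∈ A, jacobiSym (l i : ℤ) (l i0) = if i1 ∈ A then -1 else 1 := fun A hA => by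
    rw [← Finset.prod_ite_eq' A i1 (fun _ => (-1 : ℤ))]
    refine Finset.prod_congr rfl fun i hi => ?_
    have hne : i ≠ i0 := fun h => hA (h ▸ hi)
    rw [recip i0 i hne, f0 i hne]
  have p1 : ∀ (A : Finset (Fin n)) (j), j ∉ A → j ≠ i0 → ∏ i ∈ A, jacobiSym (l i : ℤ) (l j) =
      (if i0 ∈ A then (if j = i1 then (1 : ℤ) else -1) else 1) * (-1) ^ A.card := fun A j hA hj => by
    rw [← Finset.prod_ite_eq' A i0 (fun _ => (if j = i1 then (1 : ℤ) else -1)),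
      ← Finset.prod_const, ← Finset.prod_mul_distrib]
    refine Finset.prod_congr rfl fun i hi => ?_
    by_cases h0 : i = i0
    · rw [h0, f0 j hj]; by_cases h1 : j = i1 <;> simp [h1]
    · rw [f1 i j h0 hj (fun h => hA (h ▸ hi))]; simp [h0]
  have hnD : ∀ j, j ∈ D → j ∉ E := fun j h1 h2 => Finset.disjoint_left.mp hdis h1 h2
  have hnE : ∀ j, j ∈ E → j ∉ D := fun j h1 h2 => Finset.disjoint_left.mp hdis h2 h1
  have key := dl_signs i0 i1 h01 D E hU hdis (by simpa using hneven) s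
    (fun hm => by rw [← p0 D (hnE _ hm)]; exact rE _ hm)
    (fun hm => by rw [← p0 E (hnD _ hm)]; have := rD _ hm; rw [n0] at this; linarith)
    (fun j hm hj => by rw [← p1 D j (hnE _ hm) hj]; exact rE _ hm)
    (fun j hm hj => by
      rw [← p1 E j (hnD _ hm) hj]; have := rD _ hm; rw [n1 j hj, one_mul] at this; exact this)
  refine ⟨fun h => ?_, fun h => ?_⟩
  · rw [hd, key.1 h]; simp
  · rw [hd, key.2 h]; simp

/-- **Deng–Li family: the Kummer relation `√2·√ℓ₂ = α·√ε`.** There exists `α ∈ K = ℚ(√m)`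
with `α²·ε = 2·ℓ₂`, where `ε = a + b√m` is the fundamental unit. -/
theorem dengLi_kummer_relation
    (n : ℕ) (hn : 2 ≤ n) (hneven : Even n)
    (l : Fin n → ℕ) (hlp : ∀ i, (l i).Prime) (hlinj : Function.Injective l)
    (hl1 : l ⟨0, by omega⟩ % 8 = 3)
    (hli : ∀ i : Fin n, i ≠ ⟨0, by omega⟩ → l i % 8 = 5)
    (hleg12 : jacobiSym (l ⟨0, by omega⟩ : ℤ) (l ⟨1, by omega⟩) = -1)
    (hleg1j : ∀ j : Fin n, 2 ≤ (j : ℕ) → jacobiSym (l ⟨0, by omega⟩ : ℤ) (l j) = 1)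
    (hlegij : ∀ i j : Fin n, 1 ≤ (i : ℕ) → i < j → jacobiSym (l i : ℤ) (l j) = -1)
    (m : ℕ) (hm : m = ∏ i, l i)
    (K : Type) [Field K] [NumberField K] (hdeg : Module.finrank ℚ K = 2)
    (α : 𝓞 K) (hα : α ^ 2 = (m : 𝓞 K)) (hgen : Algebra.adjoin ℤ {α} = ⊤)
    (a b : ℕ) (ha : 0 < a) (hb : 0 < b) (hpell : a ^ 2 = m * b ^ 2 + 1)
    (hmin : ∀ a' b' : ℕ, 0 < a' → 0 < b' → a' ^ 2 = m * b' ^ 2 + 1 → a ≤ a') :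
    ∃ β : K, β ^ 2 * ((a : K) + (b : K) * algebraMap (𝓞 K) K α)
      = 2 * ((l ⟨1, by omega⟩ : ℕ) : K) := by
  have hmpos : 0 < m := hm ▸ Finset.prod_pos fun i _ => (hlp i).pos
  have hodd : ∀ j, l j % 8 = 3 ∨ l j % 8 = 5 := fun j => by
    by_cases hj : j = ⟨0, by omega⟩
    · left; rw [hj]; exact hl1
    · right; exact hli j hj
  have key := dl_main n hneven ⟨0, by omega⟩ ⟨1, by omega⟩ rfl rfl l hlp hl1 hli hleg12 hleg1j hlegij
  -- `1 < a`
  have ha1 : 1 < a := by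
    have : 0 < m * b ^ 2 := by positivity
    nlinarith
  rcases Nat.even_or_odd a with hae | hao
  · -- `a` even
    obtain ⟨k, hk⟩ := hae
    obtain ⟨v, rfl⟩ : ∃ v, a = v + 1 := ⟨a - 1, by omega⟩
    have hcop : Nat.Coprime (v + 2) v := by
      have : Nat.Coprime 2 v := by
        rw [Nat.coprime_two_left, Nat.odd_iff]; omega
      simpa using this
    obtain ⟨d, e, x, y, hde, hu, hv, hxy⟩ := dl_split (v + 2) v m b hb hmpos hcop (by linarith)
    have hd := (key d e x y 2 (-1) (hde.trans hm) (by omega) (Or.inr rfl) (fun i => by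
      have ho : Odd (l i) := by rw [Nat.odd_iff]; have := hodd i; omega
      rw [Nat.cast_ofNat, jacobiSym.at_two ho, ZMod.χ₈_nat_mod_eight]
      rcases hodd i with h | h <;> rw [h] <;> decide)).2 rfl
    rw [← hd]
    have hαK : (algebraMap (𝓞 K) K α) ^ 2 = (m : K) := by
      rw [← map_pow, hα, map_natCast]
    generalize algebraMap (𝓞 K) K α = r at *
    have hunit : (((v + 1 : ℕ) : K) + b * r) * (((v + 1 : ℕ) : K) - b * r) = 1 := by
      have : (((v + 1 : ℕ) : K)) ^ 2 = m * b ^ 2 + 1 := by exact_mod_cast hpell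
      linear_combination this - (b : K) ^ 2 * hαK
    have h1 : ((v : K)) + 2 = d * x ^ 2 := by exact_mod_cast hu
    have h2 : (v : K) = e * y ^ 2 := by exact_mod_cast hv
    have h3 : (x : K) * y = b := by exact_mod_cast hxy
    have h4 : (d : K) * e = m := by exact_mod_cast hde
    -- the square root of `2 d ε`
    have hsq : ((d : K) * x + y * r) ^ 2 = 2 * d * (((v + 1 : ℕ) : K) + b * r) := by
      push_cast
      linear_combination (y : K) ^ 2 * hαK - d * h1 - d * h2 + 2 * d * r * h3 - (y : K) ^ 2 * h4
    refine ⟨(d * x + y * r) * (((v + 1 : ℕ) : K) - b * r), ?_⟩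
    generalize ((v + 1 : ℕ) : K) = A at *
    have : 2 * (d : K) * ((A + b * r) * (A - b * r)) ^ 2 = 2 * d := by rw [hunit]; ring
    linear_combination (A - b * r) ^ 2 * (A + b * r) * hsq + this
  · -- `a` odd: contradicts minimality
    exfalso
    obtain ⟨k, rfl⟩ := hao
    have hme : m % 2 = 1 := by
      have : Odd m := by
        rw [hm]
        exact Finset.prod_induction l Odd (fun _ _ => Odd.mul) odd_one
          (fun i _ => by rw [Nat.odd_iff]; have := hodd i; omega)
      exact Nat.odd_iff.mp this
    have hbe : Even b := by
      by_contra hbo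
      rw [Nat.not_even_iff_odd] at hbo
      have h1 : Odd (m * b ^ 2) := (Nat.odd_iff.mpr hme).mul hbo.pow
      have h2 : Odd ((2 * k + 1) ^ 2) := Odd.pow ⟨k, rfl⟩
      rw [Nat.odd_iff] at h1 h2
      omega
    obtain ⟨t, ht⟩ := hbe
    have hcop : Nat.Coprime (k + 1) k := by simp
    obtain ⟨d, e, x, y, hde, hu, hv, hxy⟩ := dl_split (k + 1) k m t (by omega) hmpos hcop (by
      subst ht; nlinarith)
    have hd := (key d e x y 1 1 (hde.trans hm) (by omega) (Or.inl rfl) (fun i => by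
      rw [Nat.cast_one, jacobiSym.one_left])).1 rfl
    subst hd
    rw [one_mul] at hde hu
    subst hde
    have htp : 0 < x * y := by omega
    have hx : 0 < x := Nat.pos_of_mul_pos_right htp
    have hy : 0 < y := Nat.pos_of_mul_pos_left htp
    have := hmin x y hx hy (by omega)
    nlinarith
end

section
/- Let m ≥ 3 be a squarefree integer with m ≡ 3 (mod 4), let χ be given by χ(a) = J(m|a) (Jacobi symbol) for odd a, and let c be an odd positive integer with gcd(c, m) = 1. For n ≥ 0 set f_n = 2^(n+2)·m, and for each integer a with 1 ≤ a ≤ f_n and gcd(a, 2m) = 1 let a′_c be the unique integer with 1 ≤ a′_c ≤ f_n and a′_c·c ≡ a (mod f_n), and set λ^n_a(c) = (a′_c·c − a)/f_n ∈ ℤ. Define the integer T_n(c) = ∑_a ( λ^n_a(c) + (1 − c)/2 )·a·χ(a), the sum over the integers 1 ≤ a ≤ f_n with gcd(a, 2m) = 1. Then for every n ≥ 0 one has the congruence T_{n+1}(c) ≡ T_n(c) (mod 2^(n+2)). -/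
open Finset

/-- Splitting a sum over `1..2f` into the two lifts of each residue. -/
lemma sum_Icc_double (f : ℕ) (g : ℕ → ℤ) :
    ∑ a ∈ Finset.Icc 1 (2 * f), g a = ∑ a ∈ Finset.Icc 1 f, (g a + g (a + f)) := by
  have e : ∀ N : ℕ, Finset.Icc 1 N = Finset.Ico 1 (N + 1) := by
    intro N; ext x; simp only [Finset.mem_Icc, Finset.mem_Ico]; omega
  rw [e, e, Finset.sum_add_distrib,
    ← Finset.sum_Ico_consecutive g (show 1 ≤ f + 1 by omega) (show f + 1 ≤ 2 * f + 1 by omega),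
    Finset.sum_Ico_add' g 1 (f + 1) f]
  congr 2
  congr 1 <;> omega

/-- Among representatives, a lift of `b` modulo `2f` is `b` or `b + f`. -/
lemma lift_cases (f b x c : ℤ) (hf : 0 < f) (hb1 : 1 ≤ b) (hb2 : b ≤ f) (hx1 : 1 ≤ x)
    (hx2 : x ≤ 2 * f) (hc : IsCoprime f c) (h : f ∣ x * c - b * c) : x = b ∨ x = b + f := by
  rw [← sub_mul] at h
  obtain ⟨k, hk⟩ := hc.dvd_of_dvd_mul_right h
  have h1 : k < 2 := by nlinarith
  have h2 : -1 < k := by nlinarith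
  have : k = 0 ∨ k = 1 := by omega
  rcases this with rfl | rfl
  · left; linarith
  · right; linarith

/-- The relation between the coefficients at the two levels. -/
lemma lam_rel (f b x y c a l l1 l2 : ℤ) (hf : 0 < f) (hb1 : 1 ≤ b) (hb2 : b ≤ f)
    (hx1 : 1 ≤ x) (hx2 : x ≤ 2 * f) (hy1 : 1 ≤ y) (hy2 : y ≤ 2 * f) (hc : IsCoprime f c)
    (hl : l * f = b * c - a) (h1 : l1 * (2 * f) = x * c - a)
    (h2 : l2 * (2 * f) = y * c - (a + f)) : 2 * (l1 + l2) = 2 * l + c - 1 := by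
  have hx := lift_cases f b x c hf hb1 hb2 hx1 hx2 hc ⟨2 * l1 - l, by linarith⟩
  have hy := lift_cases f b y c hf hb1 hb2 hy1 hy2 hc ⟨2 * l2 + 1 - l, by linarith⟩
  have hxy : x ≠ y := by
    rintro rfl
    have : f * (2 * (l1 - l2)) = f * 1 := by linarith
    have := mul_left_cancel₀ hf.ne' this
    omega
  have hs : x + y = 2 * b + f := by
    rcases hx with rfl | rfl <;> rcases hy with rfl | rfl
    · exact absurd rfl hxy
    · ring
    · ring
    · exact absurd rfl hxy
  apply mul_left_cancel₀ hf.ne'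
  have : y = 2 * b + f - x := by linarith
  subst this
  linarith

/-- **Coherence of the twisted Stickelberger 2-adic measure.** For `m ≥ 3` squarefree,
`m ≡ 3 (mod 4)`, `χ(a) = J(m|a)`, `c` odd coprime to `m`, `f_n = 2^(n+2)·m`, and
`T_n(c) = ∑_a (λ^n_a(c) + (1−c)/2)·a·χ(a)` over `1 ≤ a ≤ f_n` coprime to `2m`, one has
`T_{n+1}(c) ≡ T_n(c) (mod 2^(n+2))` for every `n ≥ 0`. -/
theorem twisted_measure_coherence
    (m : ℕ) (hm : 3 ≤ m) (hsf : Squarefree m) (hm4 : m % 4 = 3)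
    (c : ℕ) (hc : 0 < c) (hcodd : c % 2 = 1) (hcm : Nat.gcd c m = 1)
    (a' : ℕ → ℕ → ℕ) (lam : ℕ → ℕ → ℤ)
    (ha' : ∀ n : ℕ, ∀ a ∈ (Finset.Icc 1 (2 ^ (n + 2) * m)).filter
        (fun a => Nat.Coprime a (2 * m)),
      1 ≤ a' n a ∧ a' n a ≤ 2 ^ (n + 2) * m ∧ a' n a * c ≡ a [MOD 2 ^ (n + 2) * m])
    (hlam : ∀ n : ℕ, ∀ a ∈ (Finset.Icc 1 (2 ^ (n + 2) * m)).filter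
        (fun a => Nat.Coprime a (2 * m)),
      lam n a * ((2 ^ (n + 2) * m : ℕ) : ℤ) = (a' n a : ℤ) * c - a) :
    ∀ n : ℕ,
      (2 : ℤ) ^ (n + 2) ∣
        (∑ a ∈ (Finset.Icc 1 (2 ^ (n + 3) * m)).filter
            (fun a => Nat.Coprime a (2 * m)),
          (lam (n + 1) a + (1 - (c : ℤ)) / 2) * (a : ℤ) * jacobiSym (m : ℤ) a)
        - (∑ a ∈ (Finset.Icc 1 (2 ^ (n + 2) * m)).filter
            (fun a => Nat.Coprime a (2 * m)),
          (lam n a + (1 - (c : ℤ)) / 2) * (a : ℤ) * jacobiSym (m : ℤ) a) := by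
  intro n
  have hF : 2 ^ (n + 3) * m = 2 * (2 ^ (n + 2) * m) := by ring
  have hF' : 2 ^ (n + 1 + 2) * m = 2 * (2 ^ (n + 2) * m) := by ring
  have H1 := ha' (n + 1)
  have L1 := hlam (n + 1)
  have H0 := ha' n
  have L0 := hlam n
  rw [hF'] at H1 L1
  rw [hF]
  have h2f : 2 * m ∣ 2 ^ (n + 2) * m := mul_dvd_mul (dvd_pow_self 2 (by omega)) dvd_rfl
  have h4f : 4 * m ∣ 2 ^ (n + 2) * m := ⟨2 ^ n, by ring⟩
  have hpf : (2 : ℤ) ^ (n + 2) ∣ ((2 ^ (n + 2) * m : ℕ) : ℤ) := ⟨m, by push_cast; ring⟩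
  have hcf : Nat.Coprime (2 ^ (n + 2) * m) c := by
    apply Nat.Coprime.mul_left
    · apply Nat.Coprime.pow_left
      rw [Nat.coprime_two_left, Nat.odd_iff]
      exact hcodd
    · exact Nat.Coprime.symm hcm
  have hfpos : 0 < 2 ^ (n + 2) * m := by positivity
  clear ha' hlam hF hF'
  generalize 2 ^ (n + 2) * m = f at *
  have hcop : ∀ a, Nat.Coprime (a + f) (2 * m) ↔ Nat.Coprime a (2 * m) := by
    intro a
    obtain ⟨k, rfl⟩ := h2f
    exact Nat.coprime_add_mul_left_left a (2 * m) k
  have hchi : ∀ a, Nat.Coprime a (2 * m) → jacobiSym (m : ℤ) (a + f) = jacobiSym (m : ℤ) a := by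
    intro a hco
    have hodd : Odd a := Nat.coprime_two_right.1 (hco.coprime_dvd_right ⟨m, rfl⟩)
    have hev : Even f := (even_iff_two_dvd.2 (dvd_trans ⟨m, rfl⟩ h2f))
    rw [jacobiSym.mod_right _ (hodd.add_even hev), jacobiSym.mod_right _ hodd]
    obtain ⟨k, rfl⟩ := h4f
    simp
  rw [Finset.sum_filter, Finset.sum_filter, sum_Icc_double, ← Finset.sum_sub_distrib]
  apply Finset.dvd_sum
  intro a ha
  have ha2 := Finset.mem_Icc.mp ha
  simp only [hcop]
  split_ifs with hco
  · have m0 : a ∈ (Finset.Icc 1 f).filter (fun a => Nat.Coprime a (2 * m)) := by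
      simp only [Finset.mem_filter, Finset.mem_Icc]; exact ⟨ha2, hco⟩
    have m1 : a ∈ (Finset.Icc 1 (2 * f)).filter (fun a => Nat.Coprime a (2 * m)) := by
      simp only [Finset.mem_filter, Finset.mem_Icc]; exact ⟨by omega, hco⟩
    have m2 : a + f ∈ (Finset.Icc 1 (2 * f)).filter (fun a => Nat.Coprime a (2 * m)) := by
      simp only [Finset.mem_filter, Finset.mem_Icc]; exact ⟨by omega, (hcop a).2 hco⟩
    obtain ⟨b1, b2, -⟩ := H0 a m0
    obtain ⟨x1, x2, -⟩ := H1 a m1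
    obtain ⟨y1, y2, -⟩ := H1 (a + f) m2
    have e0 := L0 a m0
    have e1 := L1 a m1
    have e2 := L1 (a + f) m2
    push_cast at e1 e2
    have key := lam_rel (f : ℤ) (a' n a) (a' (n + 1) a) (a' (n + 1) (a + f)) c a _ _ _
      (by omega) (by omega) (by omega) (by omega) (by omega) (by omega) (by omega)
      (Nat.isCoprime_iff_coprime.2 hcf) e0 e1 e2
    obtain ⟨d, hd⟩ : ∃ d : ℤ, (1 - (c : ℤ)) / 2 = d := ⟨_, rfl⟩
    have hd2 : (c : ℤ) = 1 - 2 * d := by omega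
    rw [hd, hchi a hco]
    have key2 : lam n a = lam (n + 1) a + lam (n + 1) (a + f) + d := by linarith
    rw [key2]
    obtain ⟨k, hk⟩ := hpf
    refine ⟨(lam (n + 1) (a + f) + d) * k * jacobiSym (m : ℤ) a, ?_⟩
    push_cast
    rw [hk]
    ring
  · simp
end
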